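/- Let C be a commutative Noetherian ring with Krull dimension D < ∞ and let A = C[x_1,…,x_n]. Then for every r ≥ max(3, D+2), every matrix g in the even split orthogonal group O(2r, A) can be reduced, by multiplying from the left by at most N = n(11r−7) + (nD + r(r−1)/2)·(r(r−1)/2 + ⌈(r−1)/2⌉ + 8r−2) + 10r−10 elementary orthogonal transvections, to a matrix of block-diagonal shape diag(1, β, 1) with β in O(2r−2, A) (β occupying the rows/columns indexed 2,…,r,−r,…,−2). -/

import Mathlib

open Matrix

section EvenDefs

variable {R : Type*} [CommRing R]

/-- In the basis `e_1,…,e_r,e_{-r},…,e_{-1}` of `R^{2r}` (0-indexed by `Fin (2*r)`),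
the position of `e_{-i}` given the position of `e_i` (and vice versa). -/
def negE (r : ℕ) (i : Fin (2 * r)) : Fin (2 * r) := ⟨2 * r - 1 - i.val, by omega⟩

/-- The split quadratic form `q(x) = ∑_{i=1}^r x_i x_{-i}` on `R^{2r}`. -/
def quadE (r : ℕ) (x : Fin (2 * r) → R) : R :=
  ∑ i : Fin r, x ⟨i.val, by omega⟩ * x ⟨2 * r - 1 - i.val, by omega⟩

/-- The even split orthogonal group `O(2r,R)`, as a set of matrices. -/
def OE (r : ℕ) (R : Type*) [CommRing R] : Set (Matrix (Fin (2 * r)) (Fin (2 * r)) R) :=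
  {g | IsUnit g ∧ ∀ x : Fin (2 * r) → R, quadE r (g.mulVec x) = quadE r x}

/-- The elementary orthogonal transvection `T_{i,j}(ξ) = e + ξ e_{i,j} - ξ e_{-j,-i}`. -/
def TE (r : ℕ) (i j : Fin (2 * r)) (ξ : R) : Matrix (Fin (2 * r)) (Fin (2 * r)) R :=
  1 + ξ • Matrix.single i j 1 - ξ • Matrix.single (negE r j) (negE r i) 1

/-- Being an elementary orthogonal transvection (even case): `T_{i,j}(ξ)` with `i ≠ ±j`. -/
def IsElemE (r : ℕ) (g : Matrix (Fin (2 * r)) (Fin (2 * r)) R) : Prop :=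
  ∃ i j : Fin (2 * r), ∃ ξ : R, i ≠ j ∧ i ≠ negE r j ∧ g = TE r i j ξ

/-- `EO(2r,R)^{≤N}` : products of at most `N` elementary orthogonal transvections. -/
def EOE (r N : ℕ) (R : Type*) [CommRing R] : Set (Matrix (Fin (2 * r)) (Fin (2 * r)) R) :=
  {g | ∃ L : List (Matrix (Fin (2 * r)) (Fin (2 * r)) R),
    L.length ≤ N ∧ (∀ m ∈ L, IsElemE r m) ∧ g = L.prod}

/-- `IUm_{2r}(R)` : isotropic unimodular columns. -/
def IUmE (r : ℕ) (R : Type*) [CommRing R] : Set (Fin (2 * r) → R) :=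
  {b | Ideal.span (Set.range b) = ⊤ ∧ quadE r b = 0}

end EvenDefs

/-!
Once transvections carry the first column of `g` to `e_1`, finitely many more that fix `e_1` carry
the image of `e_{-1}` back to `e_{-1}`, and orthogonality gives the block shape. Over a ring of
dimension at most `r - 2` this is a stable range argument: by prime avoidance, transvections make
the entries `a_j` with `j ≠ 1` of the upper half of the column generate an ideal of height at least
`r - 1`, that is, the unit ideal.

Over `A = C[x_1, …, x_n]` that ideal only has height greater than `D = dim C`, so by Suslin's
monic polynomial theorem it contains an `f` that becomes monic in `T` under the substitution
`x_i ↦ s_i T + T ^ k_i`, with the `k_i ≥ 2` independent of the `s_i`. For `s_i = x_i - 1` the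
substituted column equals the original one at `T = 1` and its column of constant terms at `T = 0`,
where the argument over `C` applies.

To join the values at `T = 1` and `T = 0` of the column over `A[T]`, make two of its entries monic.
Given finitely many primes of `A`, further transvections make these two entries generate a constant
`β ∈ A` outside all of them. The values at two points that agree modulo a high power of `β` are then
joined by boundedly many transvections: the differences of the entries are multiples of `β`, hence
of combinations of the two chosen entries. Choosing the primes minimal over the `β`s already found,
`dim A + 1 = n + D + 1` of them generate the unit ideal, so the same number of steps
leads from `1` to `0`.
-/

section PrimeAvoidance

variable {R : Type*} [CommRing R]

theorem exists_mem_iff_of_isAntichain {F : Set (Ideal R)} (hF : F.Finite)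
    (hprime : ∀ Q ∈ F, Q.IsPrime) (hanti : IsAntichain (· ≤ ·) F) (p : Ideal R → Prop) :
    ∃ ξ : R, ∀ Q ∈ F, ξ ∈ Q ↔ p Q := by
  classical
  let inside := {Q ∈ hF.toFinset | p Q}
  let outside := {Q ∈ hF.toFinset | ¬ p Q}
  have hnot : ¬ (↑(inside.inf id) : Set R) ⊆ ⋃ Q ∈ (outside : Set (Ideal R)), (Q : Set R) := by
    intro hsub
    obtain ⟨P, hP, hle⟩ := (Ideal.subset_union_prime (f := id) ⊥ ⊥ fun Q hQ _ _ ↦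
      hprime Q (by simp_all [outside])).1 hsub
    simp only [outside, Finset.mem_filter, Set.Finite.mem_toFinset] at hP
    obtain ⟨Q, hQ, hQP⟩ := ((hprime P hP.1).inf_le' (f := id)).1 hle
    simp only [inside, Finset.mem_filter, Set.Finite.mem_toFinset] at hQ
    exact hP.2 (hanti.eq hQ.1 hP.1 hQP ▸ hQ.2)
  obtain ⟨ξ, hinside, houtside⟩ := Set.not_subset.1 hnot
  refine ⟨ξ, fun Q hQ ↦ ⟨fun hξ ↦ by_contra fun hp ↦ houtside ?_, fun hp ↦ ?_⟩⟩
  · exact Set.mem_biUnion (by simpa [outside] using ⟨hQ, hp⟩) hξ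
  · have hle : inside.inf id ≤ Q := Finset.inf_le (f := id) (by simpa [inside] using ⟨hQ, hp⟩)
    exact hle hinside

theorem exists_forall_add_mul_mem_imp {F : Set (Ideal R)} (hF : F.Finite)
    (hprime : ∀ Q ∈ F, Q.IsPrime) (hanti : IsAntichain (· ≤ ·) F) {κ : Type*} (u w : κ → R) :
    ∃ ξ : R, ∀ Q ∈ F, (∀ k, u k + ξ * w k ∈ Q) → ∀ k, u k ∈ Q ∧ w k ∈ Q := by
  obtain ⟨ξ, hξ⟩ := exists_mem_iff_of_isAntichain hF hprime hanti fun Q ↦ ∃ k, u k ∉ Q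
  refine ⟨ξ, fun Q hQ h ↦ ?_⟩
  have hu : ∀ k, u k ∈ Q := by
    by_contra! hex
    obtain ⟨k, hk⟩ := hex
    exact hk ((Q.add_mem_iff_left (Q.mul_mem_right _ ((hξ Q hQ).2 ⟨k, hk⟩))).1 (h k))
  have hξQ : ξ ∉ Q := fun hmem ↦ ((hξ Q hQ).1 hmem).elim fun k hk ↦ hk (hu k)
  exact fun k ↦ ⟨hu k, ((hprime Q hQ).mem_or_mem
    ((Q.add_mem_iff_right (hu k)).1 (h k))).resolve_left hξQ⟩

theorem exists_add_mul_mem_imp {F : Set (Ideal R)} (hF : F.Finite)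
    (hprime : ∀ Q ∈ F, Q.IsPrime) (hanti : IsAntichain (· ≤ ·) F) (u w : R) :
    ∃ ξ : R, ∀ Q ∈ F, u + ξ * w ∈ Q → u ∈ Q ∧ w ∈ Q := by
  simpa using exists_forall_add_mul_mem_imp hF hprime hanti (κ := Unit) (fun _ ↦ u) fun _ ↦ w

theorem isAntichain_minimalPrimes (I : Ideal R) : IsAntichain (· ≤ ·) I.minimalPrimes :=
  setOfPred_minimal_antichain _

end PrimeAvoidance

section Height

variable {R : Type*} [CommRing R]

theorem height_le_of_ringKrullDim_le {d : ℕ} (hd : ringKrullDim R ≤ d) (P : Ideal R)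
    [hP : P.IsPrime] : P.height ≤ d := by
  exact_mod_cast Ideal.height_le_ringKrullDim_of_isPrime.trans hd

theorem add_one_le_height_of_forall_minimalPrimes {I P : Ideal R} [P.IsPrime] (hIP : I ≤ P)
    {n : ℕ∞} (h : ∀ Q ∈ I.minimalPrimes, Q ≤ P → n ≤ Q.height ∧ Q ≠ P) :
    n + 1 ≤ P.height := by
  obtain ⟨Q, hQ, hQP⟩ := Ideal.exists_minimalPrimes_le hIP
  have := hQ.1.1
  obtain ⟨hn, hne⟩ := h Q hQ hQP
  exact (add_le_add_left hn 1).trans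
    (Ideal.height_add_one_le_of_lt_of_isPrime (lt_of_le_of_ne hQP hne))

variable [IsNoetherianRing R]

theorem exists_forall_card_le_height {κ : Type*} (s : R) (a : κ → R) (S : Finset κ) :
    ∃ ξ : κ → R, (∀ j ∉ S, ξ j = 0) ∧ ∀ P : Ideal R, P.IsPrime →
      (∀ j ∈ S, a j + ξ j * s ∈ P) → s ∉ P → (S.card : ℕ∞) ≤ P.height := by
  classical
  induction S using Finset.induction_on with
  | empty => exact ⟨0, by simp⟩
  | insert j S hj ih =>
    obtain ⟨ξ, hξ0, hξ⟩ := ih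
    let I : Ideal R := Ideal.span ((fun i ↦ a i + ξ i * s) '' S)
    obtain ⟨x, hx⟩ := exists_add_mul_mem_imp
      (Ideal.finite_minimalPrimes_of_isNoetherianRing R I) (fun Q hQ ↦ hQ.1.1)
      (isAntichain_minimalPrimes I) (a j) s
    refine ⟨Function.update ξ j x, fun i hi ↦ ?_, fun P hP hall hs ↦ ?_⟩
    · rw [Finset.mem_insert, not_or] at hi
      rw [Function.update_of_ne hi.1, hξ0 i hi.2]
    have hIP : I ≤ P := by
      rw [Ideal.span_le]
      rintro _ ⟨i, hi, rfl⟩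
      simpa [ne_of_mem_of_not_mem hi hj] using hall i (Finset.mem_insert_of_mem hi)
    rw [Finset.card_insert_of_notMem hj, Nat.cast_add_one]
    refine add_one_le_height_of_forall_minimalPrimes hIP fun Q hQ hQP ↦ ⟨?_, ?_⟩
    · exact hξ Q hQ.1.1 (fun i hi ↦ hQ.1.2 (Ideal.subset_span ⟨i, hi, rfl⟩)) fun h ↦ hs (hQP h)
    · rintro rfl
      exact hs (hx Q hQ (by simpa using hall j (Finset.mem_insert_self _ _))).2

theorem exists_forall_le_height (p : R → Prop)
    (h : ∀ F : Set (Ideal R), F.Finite → (∀ Q ∈ F, Q.IsPrime) → IsAntichain (· ≤ ·) F →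
      ∃ β, p β ∧ ∀ Q ∈ F, β ∉ Q) (k : ℕ) :
    ∃ β : Fin k → R, (∀ i, p (β i)) ∧
      ∀ P : Ideal R, P.IsPrime → (∀ i, β i ∈ P) → (k : ℕ∞) ≤ P.height := by
  induction k with
  | zero => exact ⟨Fin.elim0, by simp⟩
  | succ k ih =>
    obtain ⟨β, hβp, hβ⟩ := ih
    let I : Ideal R := Ideal.span (Set.range β)
    obtain ⟨γ, hγp, hγ⟩ := h I.minimalPrimes (Ideal.finite_minimalPrimes_of_isNoetherianRing R I)
      (fun Q hQ ↦ hQ.1.1) (isAntichain_minimalPrimes I)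
    refine ⟨Fin.snoc β γ, Fin.forall_fin_succ'.2 (by simpa using ⟨hβp, hγp⟩), fun P hP hall ↦ ?_⟩
    rw [Fin.forall_fin_succ'] at hall
    simp only [Fin.snoc_castSucc, Fin.snoc_last] at hall
    rw [Nat.cast_add_one]
    refine add_one_le_height_of_forall_minimalPrimes
      (Ideal.span_le.2 (Set.range_subset_iff.2 hall.1)) fun Q hQ hQP ↦ ⟨?_, ?_⟩
    · exact hβ Q hQ.1.1 fun i ↦ hQ.1.2 (Ideal.subset_span ⟨i, rfl⟩)
    · rintro rfl
      exact hγ Q hQ hall.2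

theorem exists_span_range_eq_top {d : ℕ} (hd : ringKrullDim R ≤ d) (p : R → Prop)
    (h : ∀ F : Set (Ideal R), F.Finite → (∀ Q ∈ F, Q.IsPrime) → IsAntichain (· ≤ ·) F →
      ∃ β, p β ∧ ∀ Q ∈ F, β ∉ Q) :
    ∃ β : Fin (d + 1) → R, (∀ i, p (β i)) ∧ Ideal.span (Set.range β) = ⊤ := by
  obtain ⟨β, hβp, hβ⟩ := exists_forall_le_height p h (d + 1)
  refine ⟨β, hβp, by_contra fun hne ↦ ?_⟩
  obtain ⟨M, hM, hle⟩ := Ideal.exists_le_maximal _ hne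
  have := (hβ M hM.isPrime fun i ↦ hle (Ideal.subset_span ⟨i, rfl⟩)).trans
    (height_le_of_ringKrullDim_le hd M)
  norm_cast at this
  omega

end Height

section LeadingCoeff

open Polynomial

variable {R : Type*} [CommRing R]

theorem krullDim_primesOver_polynomial_le (p : Ideal R) [p.IsPrime] :
    Order.krullDim (p.primesOver R[X]) ≤ 1 := by
  rw [Order.krullDim_eq_of_orderIso (PrimeSpectrum.primesOverOrderIsoFiber R R[X] p),
    ← ringKrullDim, ← ringKrullDim_eq_of_ringEquiv (polyEquivTensor R p.ResidueField).toRingEquiv]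
  exact (Ring.krullDimLE_iff (n := 1)).1 inferInstance

theorem height_le_height_add_one_of_liesOver [IsNoetherianRing R] (p : Ideal R) [p.IsPrime]
    (P : Ideal R[X]) [P.IsPrime] [hP : P.LiesOver p] : P.height ≤ p.height + 1 := by
  let π := Ideal.Quotient.mk (p.map (algebraMap R R[X]))
  have hker : RingHom.ker π ≤ P := by
    rw [Ideal.mk_ker, Ideal.map_le_iff_le_comap]
    exact hP.over.le
  have hprime : (P.map π).IsPrime :=
    Ideal.map_isPrime_of_surjective Ideal.Quotient.mk_surjective hker
  have hcomap : (P.map π).comap π = P := by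
    rw [Ideal.comap_map_of_surjective' _ Ideal.Quotient.mk_surjective, sup_eq_left.2 hker]
  have liesOver (Q : Set.Iic (⟨P.map π, hprime⟩ : PrimeSpectrum _)) :
      (Q.1.asIdeal.comap π).LiesOver p := by
    refine ⟨le_antisymm (Ideal.map_le_iff_le_comap.1 ?_) ?_⟩
    · exact Ideal.mk_ker.ge.trans (Ideal.ker_le_comap π)
    · exact (Ideal.comap_mono ((Ideal.comap_mono Q.2).trans hcomap.le)).trans hP.over.ge
  let toPrimesOver (Q : Set.Iic (⟨P.map π, hprime⟩ : PrimeSpectrum _)) : p.primesOver R[X] :=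
    ⟨Q.1.asIdeal.comap π, inferInstance, liesOver Q⟩
  have hmono : StrictMono toPrimesOver := fun Q Q' hQ ↦
    (Ideal.orderEmbeddingOfSurjective π Ideal.Quotient.mk_surjective).strictMono hQ
  refine (Ideal.height_le_height_add_of_liesOver p P).trans (add_le_add_right ?_ _)
  have := (Order.krullDim_le_of_strictMono _ hmono).trans (krullDim_primesOver_polynomial_le p)
  rw [← Order.height_eq_krullDim_Iic, ← PrimeSpectrum.height_eq_orderHeight] at this
  exact_mod_cast this

theorem le_map_comap_C_of_leadingCoeff_le {I : Ideal R[X]} (h : I.leadingCoeff ≤ I.comap C) :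
    I ≤ (I.comap C).map C := by
  intro f hf
  induction hn : f.support.card using Nat.strong_induction_on generalizing f with
  | _ n ih =>
    obtain rfl | hf0 := eq_or_ne f 0
    · exact zero_mem _
    have hlead : C f.leadingCoeff * X ^ f.natDegree ∈ (I.comap C).map C :=
      Ideal.mul_mem_right _ _ <| Ideal.mem_map_of_mem C <| h <|
        (Ideal.mem_leadingCoeff _ _).2 ⟨f, hf, rfl⟩
    rw [← eraseLead_add_C_mul_X_pow f]
    refine add_mem (ih _ (hn ▸ eraseLead_support_card_lt hf0) ?_ rfl) hlead
    rw [← self_sub_C_mul_X_pow]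
    exact sub_mem hf (Ideal.map_comap_le hlead)

variable [IsNoetherianRing R]

theorem height_le_of_leadingCoeff_le {P : Ideal R[X]} [P.IsPrime] {p : Ideal R} [p.IsPrime]
    (h : P.leadingCoeff ≤ p) : P.height ≤ p.height := by
  have hle : P.under R ≤ p := fun x hx ↦ h ((Ideal.mem_leadingCoeff _ _).2 ⟨C x, hx, by simp⟩)
  by_cases hcoeff : P.leadingCoeff ≤ P.under R
  · have hPmap : P ≤ (P.under R).map (algebraMap R R[X]) :=
      le_map_comap_C_of_leadingCoeff_le hcoeff
    have hquot : P.map (Ideal.Quotient.mk ((P.under R).map (algebraMap R R[X]))) = ⊥ := by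
      rwa [Ideal.map_eq_bot_iff_le_ker, Ideal.mk_ker]
    have hbot := Ideal.height_le_height_add_of_liesOver (P.under R) P
    have : Nontrivial (R[X] ⧸ (P.under R).map (algebraMap R R[X])) :=
      Ideal.Quotient.nontrivial_iff.2 (ne_top_of_le_ne_top Ideal.IsPrime.ne_top' Ideal.map_comap_le)
    rw [hquot, Ideal.height_bot, add_zero] at hbot
    exact hbot.trans (Ideal.height_mono hle)
  · have hlt : P.under R < p := lt_of_le_of_ne hle fun heq ↦ hcoeff (heq ▸ h)
    exact (height_le_height_add_one_of_liesOver (P.under R) P).trans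
      (Ideal.height_add_one_le_of_lt_of_isPrime hlt)

theorem exists_minimalPrimes_leadingCoeff_le {I : Ideal R[X]} {p : Ideal R} [hp : p.IsPrime]
    (h : I.leadingCoeff ≤ p) : ∃ P ∈ I.minimalPrimes, P.leadingCoeff ≤ p := by
  by_contra! hcon
  have hex : ∀ P ∈ I.minimalPrimes, ∃ f ∈ P, f.leadingCoeff ∉ p := by
    intro P hP
    obtain ⟨x, hx, hxp⟩ := SetLike.not_le_iff_exists.1 (hcon P hP)
    obtain ⟨f, hf, rfl⟩ := (Ideal.mem_leadingCoeff _ _).1 hx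
    exact ⟨f, hf, hxp⟩
  choose! f hfP hfp using hex
  let F := ∏ P ∈ (Ideal.finite_minimalPrimes_of_isNoetherianRing R[X] I).toFinset, f P
  have hFrad : F ∈ I.radical := by
    rw [← Ideal.sInf_minimalPrimes, Ideal.mem_sInf]
    exact fun {P} hP ↦ Ideal.mem_of_dvd _ (Finset.dvd_prod_of_mem f (by simpa using hP)) (hfP P hP)
  let lc := ∏ P ∈ (Ideal.finite_minimalPrimes_of_isNoetherianRing R[X] I).toFinset,
    (f P).leadingCoeff
  have hlead (m : ℕ) : lc ^ m ∉ p := by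
    refine fun hmem ↦ absurd (hp.mem_of_pow_mem m hmem) ?_
    simpa [lc, Ideal.IsPrime.prod_mem_iff] using hfp
  have hlead_ne (m : ℕ) : lc ^ m ≠ 0 := fun h0 ↦ hlead m (h0 ▸ p.zero_mem)
  obtain ⟨m, hm⟩ := hFrad
  have hF : F.leadingCoeff = lc := leadingCoeff_prod' _ _ (by simpa [lc] using hlead_ne 1)
  have hFm : (F ^ m).leadingCoeff = lc ^ m := by
    rw [leadingCoeff_pow' (by rw [hF]; exact hlead_ne m), hF]
  exact hlead m (h ((Ideal.mem_leadingCoeff _ _).2 ⟨F ^ m, hm, hFm⟩))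

theorem le_height_of_leadingCoeff_le {I : Ideal R[X]} {n : ℕ∞}
    (hI : ∀ P : Ideal R[X], P.IsPrime → I ≤ P → n ≤ P.height) (p : Ideal R) [p.IsPrime]
    (h : I.leadingCoeff ≤ p) : n ≤ p.height := by
  obtain ⟨P, hP, hPp⟩ := exists_minimalPrimes_leadingCoeff_le h
  have := hP.1.1
  exact (hI P hP.1.1 hP.1.2).trans (height_le_of_leadingCoeff_le hPp)

end LeadingCoeff

section Suslin

open Polynomial

theorem monic_eval₂_of_natDegree_lt {A S : Type*} [CommRing A] [CommRing S] (ψ : A →+* S[X])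
    {y : S[X]} (hy : y.Monic) {F : A[X]} (hlead : (ψ F.leadingCoeff).Monic)
    (hcoeff : ∀ m < F.natDegree, (ψ (F.coeff m)).natDegree < y.natDegree) :
    (F.eval₂ ψ y).Monic := by
  nontriviality S
  have hmonic : (ψ F.leadingCoeff * y ^ F.natDegree).Monic := hlead.mul (hy.pow _)
  rw [eval₂_eq_sum_range, Finset.sum_range_succ, add_comm]
  refine hmonic.add_of_left ((degree_sum_le _ _).trans_lt ?_)
  rw [Finset.sup_lt_iff (bot_lt_iff_ne_bot.2 (degree_ne_bot.2 hmonic.ne_zero))]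
  intro m hm
  rw [Finset.mem_range] at hm
  refine degree_lt_degree ?_
  calc (ψ (F.coeff m) * y ^ m).natDegree
      ≤ (ψ (F.coeff m)).natDegree + m * y.natDegree :=
        natDegree_mul_le.trans (add_le_add_right natDegree_pow_le _)
    _ < (m + 1) * y.natDegree := by rw [add_one_mul, add_comm]; gcongr; exact hcoeff m hm
    _ ≤ F.natDegree * y.natDegree := Nat.mul_le_mul_right _ hm
    _ ≤ (ψ F.leadingCoeff * y ^ F.natDegree).natDegree := by
        rw [hlead.natDegree_mul (hy.pow _), hy.natDegree_pow]
        exact Nat.le_add_left _ _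

variable {C S : Type*} [CommRing C] [CommRing S] [Algebra C S] {σ : Type*}

/-- Suslin's substitution `x_i ↦ s_i T + T ^ k_i`, with `T` the variable of `S[X]`. -/
noncomputable def suslinHom (k : σ → ℕ) (s : σ → S) : MvPolynomial σ C →ₐ[C] S[X] :=
  MvPolynomial.aeval fun i ↦ Polynomial.C (s i) * X + X ^ k i

theorem monic_C_mul_X_add_X_pow (s : S) {k : ℕ} (hk : 2 ≤ k) :
    (Polynomial.C s * X + X ^ k).Monic := by
  rw [add_comm]
  exact monic_X_pow_add ((degree_C_mul_X_le _).trans_lt (by exact_mod_cast hk))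

theorem natDegree_C_mul_X_add_X_pow [Nontrivial S] (s : S) {k : ℕ} (hk : 2 ≤ k) :
    (Polynomial.C s * X + X ^ k).natDegree = k := by
  rw [natDegree_add_eq_right_of_natDegree_lt, natDegree_X_pow]
  rw [natDegree_X_pow]
  exact ((natDegree_C_mul_le s X).trans natDegree_X_le).trans_lt hk

theorem natDegree_suslinHom_le [Fintype σ] (k : σ → ℕ) (s : σ → S) (F : MvPolynomial σ C) :
    (suslinHom k s F).natDegree ≤ F.totalDegree * (∑ i, k i + 1) := by
  rw [suslinHom, ← MvPolynomial.aeval_map_algebraMap S]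
  have hdeg : (MvPolynomial.map (algebraMap C S) F).totalDegree ≤ F.totalDegree :=
    Finset.sup_mono (MvPolynomial.support_map_subset _ F)
  refine MvPolynomial.aeval_natDegree_le _ hdeg _ fun i ↦ ?_
  have hk : k i ≤ ∑ i, k i := Finset.single_le_sum (fun _ _ ↦ Nat.zero_le _) (Finset.mem_univ i)
  refine (natDegree_add_le _ _).trans (max_le ?_ ((natDegree_X_pow_le _).trans (by omega)))
  exact (natDegree_C_mul_le _ _).trans (natDegree_X_le.trans (by omega))

theorem suslinHom_cons_finSuccEquiv_symm {n : ℕ} (k₀ : ℕ) (k : Fin n → ℕ) (s : Fin (n + 1) → S)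
    (F : (MvPolynomial (Fin n) C)[X]) :
    suslinHom (Fin.cons k₀ k) s ((MvPolynomial.finSuccEquiv C n).symm F) =
      F.eval₂ (suslinHom k (Fin.tail s)).toRingHom (Polynomial.C (s 0) * X + X ^ k₀) := by
  have hcomp : (suslinHom (Fin.cons k₀ k : Fin (n + 1) → ℕ) s : _ →ₐ[C] S[X]).toRingHom =
      (eval₂RingHom (suslinHom k (Fin.tail s)).toRingHom
        (Polynomial.C (s 0) * X + X ^ k₀)).comp
          (MvPolynomial.finSuccEquiv C n).toAlgHom.toRingHom := by
    refine MvPolynomial.ringHom_ext (fun c ↦ ?_) (Fin.cases ?_ fun i ↦ ?_)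
    · simp [suslinHom, MvPolynomial.finSuccEquiv_apply]
    · simp [suslinHom, MvPolynomial.finSuccEquiv_X_zero]
    · simp [suslinHom, MvPolynomial.finSuccEquiv_X_succ, Fin.tail]
  simpa using congr($hcomp ((MvPolynomial.finSuccEquiv C n).symm F))

theorem exists_forall_monic_suslinHom_cons {n : ℕ} (F : (MvPolynomial (Fin n) C)[X])
    {k : Fin n → ℕ} (hF : ∀ s : Fin n → S, (suslinHom k s F.leadingCoeff).Monic) :
    ∃ k₀, 2 ≤ k₀ ∧ ∀ s : Fin (n + 1) → S,
      (suslinHom (Fin.cons k₀ k) s ((MvPolynomial.finSuccEquiv C n).symm F)).Monic := by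
  cases subsingleton_or_nontrivial S
  · exact ⟨2, le_rfl, fun s ↦ Subsingleton.elim _ _⟩
  let d := (Finset.range F.natDegree).sup fun m ↦ (F.coeff m).totalDegree
  let k₀ := d * (∑ i, k i + 1) + 2
  have hk₀ : 2 ≤ k₀ := Nat.le_add_left _ _
  refine ⟨k₀, hk₀, fun s ↦ ?_⟩
  rw [suslinHom_cons_finSuccEquiv_symm]
  refine monic_eval₂_of_natDegree_lt _ (monic_C_mul_X_add_X_pow _ hk₀) (hF _) fun m hm ↦ ?_
  rw [natDegree_C_mul_X_add_X_pow _ hk₀]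
  have hd : (F.coeff m).totalDegree ≤ d :=
    Finset.le_sup (f := fun m ↦ (F.coeff m).totalDegree) (Finset.mem_range.2 hm)
  have := (natDegree_suslinHom_le k (Fin.tail s) (F.coeff m)).trans (Nat.mul_le_mul_right _ hd)
  exact this.trans_lt (by omega)

theorem exists_forall_monic_suslinHom [IsNoetherianRing C] {d : ℕ} (hd : ringKrullDim C ≤ d)
    {n : ℕ} (I : Ideal (MvPolynomial (Fin n) C))
    (hI : ∀ P : Ideal (MvPolynomial (Fin n) C), P.IsPrime → I ≤ P → (d + 1 : ℕ∞) ≤ P.height) :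
    ∃ f ∈ I, ∃ k : Fin n → ℕ, (∀ i, 2 ≤ k i) ∧ ∀ s : Fin n → S, (suslinHom k s f).Monic := by
  induction n with
  | zero =>
    suffices I = ⊤ from ⟨1, this ▸ Submodule.mem_top, Fin.elim0, nofun, fun s ↦ by simp⟩
    by_contra hne
    obtain ⟨M, hM, hle⟩ := Ideal.exists_le_maximal I hne
    have hdim : ringKrullDim (MvPolynomial (Fin 0) C) ≤ d :=
      (ringKrullDim_eq_of_ringEquiv (MvPolynomial.isEmptyRingEquiv C (Fin 0))).trans_le hd
    have := (hI M hM.isPrime hle).trans (height_le_of_ringKrullDim_le hdim M)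
    norm_cast at this
    omega
  | succ n ih =>
    let e : MvPolynomial (Fin (n + 1)) C ≃+* (MvPolynomial (Fin n) C)[X] :=
      (MvPolynomial.finSuccEquiv C n).toRingEquiv
    have hJ : ∀ P : Ideal (MvPolynomial (Fin n) C)[X], P.IsPrime → I.comap e.symm ≤ P →
        (d + 1 : ℕ∞) ≤ P.height := by
      intro P hP hle
      rw [← e.height_comap P]
      exact hI _ inferInstance fun x hx ↦ hle (by simpa using hx)
    obtain ⟨f, hf, k, hk, hmonic⟩ := ih (I.comap e.symm).leadingCoeff fun p _ hle ↦
      le_height_of_leadingCoeff_le hJ p hle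
    obtain ⟨F, hFI, rfl⟩ := (Ideal.mem_leadingCoeff _ _).1 hf
    obtain ⟨k₀, hk₀, hmonic'⟩ := exists_forall_monic_suslinHom_cons F hmonic
    exact ⟨e.symm F, hFI, Fin.cons k₀ k, Fin.cases hk₀ hk, hmonic'⟩

end Suslin

section Elementary

variable {R ι : Type*} [CommRing R] [DecidableEq ι]

/-- The transvection `T_{i,j}(ξ)` of `R ^ (ι ⊕ ι)`, where the index `-i` is `i.swap`. -/
def transv (i j : ι ⊕ ι) (ξ : R) : Matrix (ι ⊕ ι) (ι ⊕ ι) R :=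
  1 + ξ • single i j 1 - ξ • single j.swap i.swap 1

variable [Fintype ι]

/-- The split quadratic form on `R ^ (ι ⊕ ι)`, with `inl i` and `inr i` dual to each other. -/
def hypForm (v : ι ⊕ ι → R) : R := ∑ i, v (.inl i) * v (.inr i)

/-- `IsElementary m E` says that `E` is a product of at most `m` transvections. -/
inductive IsElementary : ℕ → Matrix (ι ⊕ ι) (ι ⊕ ι) R → Prop
  | one (m : ℕ) : IsElementary m 1
  | transv_mul {m : ℕ} {E : Matrix (ι ⊕ ι) (ι ⊕ ι) R} {i j : ι ⊕ ι} (hij : i ≠ j)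
      (hij' : i ≠ j.swap) (ξ : R) (hE : IsElementary m E) : IsElementary (m + 1) (transv i j ξ * E)

/-- `Reach m v w` says that at most `m` transvections carry the column `v` to `w`. -/
def Reach (m : ℕ) (v w : ι ⊕ ι → R) : Prop := ∃ E, IsElementary m E ∧ E *ᵥ v = w

theorem transv_mulVec (i j : ι ⊕ ι) (ξ : R) (v : ι ⊕ ι → R) :
    transv i j ξ *ᵥ v = v + Pi.single i (ξ * v j) - Pi.single j.swap (ξ * v i.swap) := by
  simp [transv, sub_mulVec, add_mulVec, single_mulVec, Pi.single]

theorem transv_neg_mul_transv {i j : ι ⊕ ι} (hij : i ≠ j) (ξ : R) :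
    transv i j (-ξ) * transv i j ξ = 1 := by
  have hj : j ≠ j.swap := by cases j <;> simp
  have hi : i.swap ≠ i := by cases i <;> simp
  have hij' : i.swap ≠ j.swap := fun h ↦ hij (Sum.swap_leftInverse.injective h)
  simp [transv, mul_add, mul_sub, add_mul, single_mul_single_of_ne, hij.symm, hj, hi, hij']
  abel

theorem hypForm_add_single (v : ι ⊕ ι → R) (i : ι ⊕ ι) (c : R) :
    hypForm (v + Pi.single i c) = hypForm v + c * v i.swap := by
  cases i <;> simp [hypForm, add_mul, mul_add, Finset.sum_add_distrib, Pi.single_apply, mul_comm]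

theorem hypForm_transv_mulVec {i j : ι ⊕ ι} (hij : i ≠ j) (ξ : R) (v : ι ⊕ ι → R) :
    hypForm (transv i j ξ *ᵥ v) = hypForm v := by
  rw [transv_mulVec, sub_eq_add_neg, ← Pi.single_neg, hypForm_add_single, hypForm_add_single,
    Sum.swap_swap, Pi.add_apply, Pi.single_eq_of_ne hij.symm]
  ring

namespace IsElementary

variable {m m' : ℕ} {E F : Matrix (ι ⊕ ι) (ι ⊕ ι) R}

theorem mono (hE : IsElementary m E) (h : m ≤ m') : IsElementary m' E := by
  induction hE generalizing m' with
  | one => exact one _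
  | transv_mul hij hij' ξ _ ih =>
    obtain ⟨k, rfl⟩ := Nat.exists_eq_add_of_le' (Nat.one_le_of_lt h)
    exact transv_mul hij hij' ξ (ih (Nat.le_of_succ_le_succ h))

theorem mul (hE : IsElementary m E) (hF : IsElementary m' F) : IsElementary (m + m') (E * F) := by
  induction hE with
  | one => exact (one_mul F).symm ▸ hF.mono (Nat.le_add_left _ _)
  | transv_mul hij hij' ξ _ ih =>
    rw [mul_assoc, Nat.add_right_comm]
    exact transv_mul hij hij' ξ ih

theorem of_transv {i j : ι ⊕ ι} (hij : i ≠ j) (hij' : i ≠ j.swap) (ξ : R) :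
    IsElementary 1 (transv i j ξ) :=
  mul_one (transv i j ξ) ▸ transv_mul hij hij' ξ (one 0)

theorem exists_mul_eq_one (hE : IsElementary m E) : ∃ F, IsElementary m F ∧ F * E = 1 := by
  induction hE with
  | one m => exact ⟨1, one m, mul_one 1⟩
  | @transv_mul m E i j hij hij' ξ _ ih =>
    obtain ⟨F, hF, hFE⟩ := ih
    refine ⟨F * transv i j (-ξ), hF.mul (of_transv hij hij' _), ?_⟩
    rw [mul_assoc, ← mul_assoc (transv i j _), transv_neg_mul_transv hij, one_mul, hFE]

theorem map {S : Type*} [CommRing S] (f : R →+* S) (hE : IsElementary m E) :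
    IsElementary m (E.map f) := by
  induction hE with
  | one => simpa using one _
  | @transv_mul m E i j hij hij' ξ _ ih =>
    have : (transv i j ξ).map f = transv i j (f ξ) := by
      ext k l
      simp [transv, one_apply, single_apply, apply_ite f]
    rw [Matrix.map_mul, this]
    exact transv_mul hij hij' _ ih

theorem submatrix_sumComm (hE : IsElementary m E) :
    IsElementary m (E.submatrix (Equiv.sumComm ι ι) (Equiv.sumComm ι ι)) := by
  induction hE with
  | one => rw [submatrix_one_equiv]; exact one _
  | @transv_mul m E i j hij hij' ξ _ ih =>
    have htransv : (transv i j ξ).submatrix (Equiv.sumComm ι ι) (Equiv.sumComm ι ι) =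
        transv i.swap j.swap ξ := by
      simp only [transv, submatrix_sub, submatrix_add, submatrix_smul, Pi.sub_apply, Pi.add_apply,
        Pi.smul_apply, submatrix_one_equiv, submatrix_single_equiv]
      rfl
    rw [← submatrix_mul_equiv _ _ _ (Equiv.sumComm ι ι), htransv]
    have hinj := (Equiv.sumComm ι ι).injective
    exact transv_mul (hinj.ne hij) (hinj.ne hij') ξ ih

theorem hypForm_mulVec (hE : IsElementary m E) (v : ι ⊕ ι → R) :
    hypForm (E *ᵥ v) = hypForm v := by
  induction hE with
  | one => rw [one_mulVec]
  | transv_mul hij hij' ξ _ ih => rw [← mulVec_mulVec, hypForm_transv_mulVec hij, ih]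

end IsElementary

namespace Reach

variable {m m' : ℕ} {u v w : ι ⊕ ι → R}

theorem refl (m : ℕ) (v : ι ⊕ ι → R) : Reach m v v := ⟨1, .one m, one_mulVec v⟩

theorem mono (h : Reach m v w) (hm : m ≤ m') : Reach m' v w :=
  h.imp fun _ hE ↦ ⟨hE.1.mono hm, hE.2⟩

theorem trans (huv : Reach m u v) (hvw : Reach m' v w) : Reach (m + m') u w := by
  obtain ⟨E, hE, rfl⟩ := huv
  obtain ⟨F, hF, rfl⟩ := hvw
  exact ⟨F * E, add_comm m m' ▸ hF.mul hE, (mulVec_mulVec _ _ _).symm⟩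

theorem symm (h : Reach m v w) : Reach m w v := by
  obtain ⟨E, hE, rfl⟩ := h
  obtain ⟨F, hF, hFE⟩ := hE.exists_mul_eq_one
  exact ⟨F, hF, by rw [mulVec_mulVec, hFE, one_mulVec]⟩

theorem map {S : Type*} [CommRing S] (f : R →+* S) (h : Reach m v w) :
    Reach m (f ∘ v) (f ∘ w) := by
  obtain ⟨E, hE, rfl⟩ := h
  exact ⟨E.map f, hE.map f, funext fun i ↦ (f.map_mulVec E v i).symm⟩

theorem comp_swap (h : Reach m v w) : Reach m (v ∘ Sum.swap) (w ∘ Sum.swap) := by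
  obtain ⟨E, hE, rfl⟩ := h
  refine ⟨_, hE.submatrix_sumComm, ?_⟩
  rw [submatrix_mulVec_equiv]
  simp [Function.comp_assoc, Sum.swap_swap_eq]

theorem hypForm_eq (h : Reach m v w) : hypForm w = hypForm v := by
  obtain ⟨E, hE, rfl⟩ := h
  exact hE.hypForm_mulVec v

theorem span_range_le (h : Reach m v w) :
    Ideal.span (Set.range w) ≤ Ideal.span (Set.range v) := by
  obtain ⟨E, -, rfl⟩ := h
  refine Ideal.span_le.2 (Set.range_subset_iff.2 fun k ↦ ?_)
  exact Ideal.sum_mem _ fun l _ ↦ Ideal.mul_mem_left _ _ (Ideal.subset_span ⟨l, rfl⟩)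

theorem span_range_eq (h : Reach m v w) : Ideal.span (Set.range w) = Ideal.span (Set.range v) :=
  le_antisymm h.span_range_le h.symm.span_range_le

end Reach

end Elementary

section Eichler

variable {R ι : Type*} [CommRing R] [DecidableEq ι] [Fintype ι]

theorem exists_isElementary_mulVec_eq (p : ι ⊕ ι) (u : ι ⊕ ι → R) (T : Finset (ι ⊕ ι))
    (hp : p ∉ T) (hp' : p.swap ∉ T) (hT : ∀ i ∈ T, i.swap ∉ T) :
    ∃ E, IsElementary T.card E ∧ ∀ v, E *ᵥ v =
      v + ∑ i ∈ T, Pi.single i (u i * v p) - Pi.single p.swap (∑ i ∈ T, u i * v i.swap) := by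
  induction T using Finset.induction_on with
  | empty => exact ⟨1, .one _, fun v ↦ by simp⟩
  | insert i T hi ih =>
    simp only [Finset.mem_insert, not_or] at hp hp' hT
    obtain ⟨E, hE, hEv⟩ := ih hp.2 hp'.2 fun j hj h ↦ (hT j (.inr hj)).2 h
    refine ⟨transv i p (u i) * E, ?_, fun v ↦ ?_⟩
    · rw [Finset.card_insert_of_notMem hi]
      exact hE.transv_mul (Ne.symm hp.1) (Ne.symm hp'.1) _
    · have hpp : p ≠ p.swap := by cases p <;> simp
      have hip : i.swap ≠ p.swap := fun h ↦ hp.1 (Sum.swap_leftInverse.injective h).symm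
      have hEp : (E *ᵥ v) p = v p := by simp [hEv, Finset.sum_apply, Pi.single_apply, hp.2, hpp]
      have hEi : (E *ᵥ v) i.swap = v i.swap := by
        simp [hEv, Finset.sum_apply, Pi.single_apply, (hT i (.inl rfl)).2, hip]
      rw [← mulVec_mulVec, transv_mulVec, hEp, hEi, hEv, Finset.sum_insert hi,
        Finset.sum_insert hi, Pi.single_add]
      abel

namespace Reach

variable (k : ι) {ξ : ι → R} {S : Finset ι} {a b a' b' : ι → R} {m : ℕ}

theorem elim_swap (h : Reach m (a ⊕ᵥ b) (a' ⊕ᵥ b')) :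
    Reach m (b ⊕ᵥ a) (b' ⊕ᵥ a') := by
  simpa using h.comp_swap

theorem add_smul_left (hk : k ∉ S) (hξ : ∀ j ∉ S, ξ j = 0) (a b : ι → R) :
    Reach S.card (a ⊕ᵥ b) ((a + a k • ξ) ⊕ᵥ (b - Pi.single k (ξ ⬝ᵥ b))) := by
  obtain ⟨E, hE, h⟩ := exists_isElementary_mulVec_eq (.inl k) (ξ ⊕ᵥ 0)
    (S.map .inl) (by simpa) (by simp) (by simp)
  refine ⟨E, Finset.card_map (Function.Embedding.inl (β := ι)) ▸ hE, ?_⟩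
  rw [h, dotProduct, ← Finset.sum_subset S.subset_univ fun j _ hj ↦ by rw [hξ j hj, zero_mul]]
  ext (j | j)
  · by_cases hj : j ∈ S <;> simp [Pi.single_apply, hj, hξ, mul_comm]
  · simp [Pi.single_apply]

theorem add_smul_right (hk : k ∉ S) (hξ : ∀ j ∉ S, ξ j = 0) (a b : ι → R) :
    Reach S.card (a ⊕ᵥ b) ((a + b k • ξ - Pi.single k (ξ ⬝ᵥ b)) ⊕ᵥ b) := by
  obtain ⟨E, hE, h⟩ := exists_isElementary_mulVec_eq (.inr k) (ξ ⊕ᵥ 0)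
    (S.map .inl) (by simp) (by simpa) (by simp)
  refine ⟨E, Finset.card_map (Function.Embedding.inl (β := ι)) ▸ hE, ?_⟩
  rw [h, dotProduct, ← Finset.sum_subset S.subset_univ fun j _ hj ↦ by rw [hξ j hj, zero_mul]]
  ext (j | j)
  · by_cases hj : j ∈ S <;> simp [Pi.single_apply, hj, hξ, mul_comm]
  · simp

end Reach

end Eichler

section HeightReduction

variable {R ι : Type*} [CommRing R] [IsNoetherianRing R] [DecidableEq ι] [Fintype ι]

theorem exists_reach_height_stage (a b : ι → R) (S : Finset ι) (k : ι)
    (hS : ∀ P : Ideal R, P.IsPrime → P.height < (Fintype.card ι - 1 : ℕ) →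
      (∀ i, a i ∈ P) → ∀ j ∈ S, b j ∈ P) :
    ∃ a' b' : ι → R, Reach (2 * (Fintype.card ι - 1)) (a ⊕ᵥ b) (a' ⊕ᵥ b') ∧
      ∀ P : Ideal R, P.IsPrime → P.height < (Fintype.card ι - 1 : ℕ) → (∀ j ≠ k, a' j ∈ P) →
        (∀ j ∈ insert k S, b' j ∈ P) ∧ ((∀ j, b' j ∈ P) → ∀ j, a' j ∈ P) := by
  have hk : k ∉ Finset.univ.erase k := Finset.notMem_erase k _
  have hcard : (Finset.univ.erase k).card = Fintype.card ι - 1 :=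
    Finset.card_erase_of_mem (Finset.mem_univ k)
  obtain ⟨ξ, hξ, hξP⟩ := exists_forall_card_le_height (a k) a (Finset.univ.erase k)
  set a₁ := a + a k • ξ
  set b₁ := b - Pi.single k (ξ ⬝ᵥ b)
  obtain ⟨η, hη, hηP⟩ := exists_forall_card_le_height (b₁ k) a₁ (Finset.univ.erase k)
  have h₁ := Reach.add_smul_left k hk hξ a b
  have h₂ := Reach.add_smul_right k hk hη a₁ b₁
  rw [hcard] at h₁ h₂ hξP hηP
  refine ⟨_, _, two_mul (Fintype.card ι - 1) ▸ h₁.trans h₂, fun P hP hlt ha' ↦ ?_⟩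
  have ha₁η (j) (hj : j ≠ k) : a₁ j + η j * b₁ k ∈ P := by
    simpa [hj, mul_comm] using ha' j hj
  have hb₁ : b₁ k ∈ P := by
    by_contra h
    exact hlt.not_ge (hηP P hP (fun j hj ↦ ha₁η j (Finset.ne_of_mem_erase hj)) h)
  have haξ (j) (hj : j ≠ k) : a j + ξ j * a k ∈ P := by
    simpa [a₁, mul_comm] using (P.add_mem_iff_left (P.mul_mem_left _ hb₁)).1 (ha₁η j hj)
  have hak : a k ∈ P := by
    by_contra h
    exact hlt.not_ge (hξP P hP (fun j hj ↦ haξ j (Finset.ne_of_mem_erase hj)) h)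
  have ha (j) : a j ∈ P := by
    obtain rfl | hj := eq_or_ne j k
    exacts [hak, (P.add_mem_iff_left (P.mul_mem_left _ hak)).1 (haξ j hj)]
  refine ⟨fun j hj ↦ ?_, fun hb j ↦ ?_⟩
  · obtain rfl | hjk := eq_or_ne j k
    · exact hb₁
    · simpa [b₁, hjk] using hS P hP hlt ha j (Finset.mem_of_mem_insert_of_ne hj hjk)
  · obtain rfl | hjk := eq_or_ne j k
    · simpa [a₁, hη j hk, hξ j hk, dotProduct] using
        P.sub_mem (ha j) (P.sum_mem fun i _ ↦ P.mul_mem_left (η i) (hb i))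
    · exact ha' j hjk

theorem exists_reach_forall_mem_of_height_lt (a b : ι → R) (S : Finset ι) :
    ∃ a' b' : ι → R,
      Reach (S.card * (2 * (Fintype.card ι - 1))) (a ⊕ᵥ b) (a' ⊕ᵥ b') ∧
      ∀ P : Ideal R, P.IsPrime → P.height < (Fintype.card ι - 1 : ℕ) →
        (∀ i, a' i ∈ P) → ∀ j ∈ S, b' j ∈ P := by
  induction S using Finset.induction_on with
  | empty => exact ⟨a, b, .refl _ _, by simp⟩
  | insert k S hk ih =>
    obtain ⟨a₁, b₁, h₁, hS₁⟩ := ih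
    obtain ⟨a₂, b₂, h₂, hS₂⟩ := exists_reach_height_stage a₁ b₁ S k hS₁
    refine ⟨a₂, b₂, ?_, fun P hP hlt ha ↦ (hS₂ P hP hlt fun j _ ↦ ha j).1⟩
    rw [Finset.card_insert_of_notMem hk, Nat.succ_mul]
    exact h₁.trans h₂

theorem exists_reach_forall_le_height (a b : ι → R)
    (hab : Ideal.span (Set.range (a ⊕ᵥ b)) = ⊤) (k : ι) :
    ∃ a' b' : ι → R,
      Reach (Fintype.card ι * (2 * (Fintype.card ι - 1))) (a ⊕ᵥ b) (a' ⊕ᵥ b') ∧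
      ∀ P : Ideal R, P.IsPrime → (∀ j ≠ k, a' j ∈ P) → (Fintype.card ι - 1 : ℕ) ≤ P.height := by
  obtain ⟨a₁, b₁, h₁, hS₁⟩ := exists_reach_forall_mem_of_height_lt a b (Finset.univ.erase k)
  obtain ⟨a₂, b₂, h₂, hS₂⟩ := exists_reach_height_stage a₁ b₁ _ k hS₁
  have h := h₁.trans h₂
  rw [← Nat.succ_mul, Nat.succ_eq_add_one, Finset.card_erase_add_one (Finset.mem_univ k),
    Finset.card_univ] at h
  refine ⟨a₂, b₂, h, fun P hP ha₂ ↦ le_of_not_gt fun hlt ↦ hP.ne_top ?_⟩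
  obtain ⟨hb₂, ha₂'⟩ := hS₂ P hP hlt ha₂
  have hb₂ (j) : b₂ j ∈ P := hb₂ j (by simp)
  rw [← top_le_iff, ← hab, ← h.span_range_eq, Ideal.span_le, Set.range_subset_iff]
  exact Sum.forall.2 ⟨ha₂' hb₂, hb₂⟩

end HeightReduction

section CrossProduct

variable {R ι : Type*} [CommRing R] (c : Fin 3 ↪ ι)

theorem add_extend_comp (a : ι → R) (h : Fin 3 → R) :
    (a + Function.extend c h 0) ∘ c = a ∘ c + h :=
  funext fun i ↦ by simp [c.injective.extend_apply]

theorem add_extend_add_extend (a : ι → R) (h h' : Fin 3 → R) :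
    a + Function.extend c h 0 + Function.extend c h' 0 = a + Function.extend c (h + h') 0 := by
  rw [add_assoc, ← Function.extend_add, add_zero]

variable [DecidableEq ι]

theorem extend_eq_add_single (h : Fin 3 → R) :
    Function.extend c h 0 =
      Pi.single (c 0) (h 0) + Pi.single (c 1) (h 1) + Pi.single (c 2) (h 2) := by
  ext k
  by_cases hk : ∃ i, c i = k
  · obtain ⟨i, rfl⟩ := hk
    fin_cases i <;> simp [c.injective.extend_apply]
  · simp only [not_exists] at hk
    simp [Function.extend_apply' _ _ _ (not_exists.2 hk), Ne.symm (hk _)]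

variable [Fintype ι] (a b : ι → R)

namespace Reach

theorem add_single_sub_single {i j : ι} (hij : i ≠ j) (ξ : R) :
    Reach 1 (a ⊕ᵥ b) ((a + Pi.single i (ξ * b j) - Pi.single j (ξ * b i)) ⊕ᵥ b) := by
  have h := add_smul_right j (S := {i}) (ξ := Pi.single i ξ) (by simpa using hij.symm)
    (by simp +contextual) a b
  simpa [← Pi.single_smul, mul_comm] using h

theorem add_crossProduct (h : Fin 3 → R) :
    Reach 3 (a ⊕ᵥ b) ((a + Function.extend c (h ⨯₃ (b ∘ c)) 0) ⊕ᵥ b) := by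
  have h₁ := add_single_sub_single a b (c.injective.ne (by decide : (0 : Fin 3) ≠ 1)) (-h 2)
  have h₂ := h₁.trans (add_single_sub_single _ b (c.injective.ne (by decide : (1 : Fin 3) ≠ 2))
    (-h 0))
  have h₃ := h₂.trans (add_single_sub_single _ b (c.injective.ne (by decide : (2 : Fin 3) ≠ 0))
    (-h 1))
  convert h₃ using 2
  rw [extend_eq_add_single, cross_apply]
  simp only [cons_val, Function.comp_apply, neg_mul, Pi.single_neg, Pi.single_sub]
  abel

/-- The commutator of the two abelian subgroups `h ↦ (a + h ⨯ b, b)` and `h ↦ (a, b + h ⨯ a)`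
consists of linear transvections of the coordinates in the range of `c`. -/
theorem commutator_crossProduct {h ρ : Fin 3 → R} (hρ : h ⬝ᵥ ρ = 0) :
    Reach 12 (a ⊕ᵥ b) ((a + Function.extend c ((ρ ⬝ᵥ (a ∘ c)) • h) 0) ⊕ᵥ
      (b + Function.extend c (-((h ⬝ᵥ (b ∘ c)) • ρ)) 0)) := by
  have h₁ := add_crossProduct c a b ρ
  have h₂ := h₁.trans (add_crossProduct c b _ (-h)).elim_swap
  have h₃ := h₂.trans (add_crossProduct c _ _ (-ρ))
  have h₄ := h₃.trans (add_crossProduct c _ _ h).elim_swap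
  set α := a ∘ c
  set β := b ∘ c
  have hα : ρ ⨯₃ β + (-ρ) ⨯₃ (β + (-h) ⨯₃ (α + ρ ⨯₃ β)) = (ρ ⬝ᵥ α) • h :=
    calc
      _ = ρ ⨯₃ (h ⨯₃ (α + ρ ⨯₃ β)) := by
        simp only [map_neg, LinearMap.neg_apply, map_add, neg_neg]
        abel
      _ = _ := by
        rw [cross_cross_eq_smul_sub_smul', hρ, dotProduct_add, dot_self_cross, add_zero,
          zero_smul, sub_zero]
  have hβ : (-h) ⨯₃ (α + ρ ⨯₃ β) + h ⨯₃ (α + (ρ ⬝ᵥ α) • h) = -((h ⬝ᵥ β) • ρ) :=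
    calc
      _ = -(h ⨯₃ (ρ ⨯₃ β)) := by
        simp only [map_neg, LinearMap.neg_apply, map_add, map_smul, cross_self, smul_zero]
        abel
      _ = _ := by
        rw [cross_cross_eq_smul_sub_smul', dotProduct_comm ρ, hρ, zero_smul, sub_zero]
  simpa only [α, β, add_extend_comp, add_extend_add_extend, hα, hβ] using h₄

end Reach

end CrossProduct

section CongruentColumns

variable {R ι : Type*} [CommRing R] [DecidableEq ι] [Fintype ι] {a b a' b' : ι → R} {β : R}

theorem exists_reach_eq_and_eq_of_dvd (c : Fin 3 ↪ ι) {ε p q : R}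
    (hβ : p * a (c 0) + q * a (c 1) = β) (ha : ∀ k, ε * β ^ 2 ∣ a' k - a k)
    (hb : ∀ k, ε ∣ b' k - b k) :
    ∃ a₁ b₁ : ι → R, Reach 12 (a ⊕ᵥ b) (a₁ ⊕ᵥ b₁) ∧ a₁ (c 0) = a' (c 0) ∧ a₁ (c 1) = a' (c 1) ∧
      (∀ k, ε ∣ a' k - a₁ k) ∧ ∀ k, ε ∣ b' k - b₁ k := by
  choose u hu using ha
  set t := 1 - a (c 2)
  set h : Fin 3 → R := ![β * u (c 0), β * u (c 1), -(t * (p * u (c 0) + q * u (c 1)))]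
  set ρ : Fin 3 → R := ![t * p, t * q, β]
  have hρ : (ε • h) ⬝ᵥ ρ = 0 := by
    simp only [vec3_dotProduct, Pi.smul_apply, smul_eq_mul, h, ρ, cons_val]
    ring
  have hρa : ρ ⬝ᵥ (a ∘ c) = β := by
    simp only [vec3_dotProduct, Function.comp_apply, ρ, t, cons_val]
    linear_combination (1 - a (c 2)) * hβ
  have hreach := Reach.commutator_crossProduct c a b hρ
  rw [hρa] at hreach
  have hdvd (v : Fin 3 → R) (k : ι) : ε ∣ Function.extend c (ε • v) 0 k := by
    rw [← smul_zero ε, Function.extend_smul]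
    exact Dvd.intro _ rfl
  refine ⟨_, _, hreach, ?_, ?_, fun k ↦ ?_, fun k ↦ ?_⟩
  · simp [c.injective.extend_apply, h]
    linear_combination -hu (c 0)
  · simp [c.injective.extend_apply, h]
    linear_combination -hu (c 1)
  · rw [Pi.add_apply, ← sub_sub, smul_comm]
    exact (((Dvd.intro _ rfl).trans (Dvd.intro _ (hu k).symm))).sub (hdvd _ k)
  · rw [Pi.add_apply, ← sub_sub, smul_dotProduct, smul_assoc, ← smul_neg]
    exact (hb k).sub (hdvd _ k)

theorem Reach.add_smul_left₂ {x y : ι} {p q : R} (hβ : p * a x + q * a y = β) {s : ι → R}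
    {S : Finset ι} (hx : x ∉ S) (hy : y ∉ S) (hs : ∀ k ∉ S, s k = 0) :
    Reach (2 * S.card) (a ⊕ᵥ b)
      ((a + β • s) ⊕ᵥ (b - (s ⬝ᵥ b) • (Pi.single x p + Pi.single y q))) := by
  have h (r : R) : ∀ k ∉ S, (r • s) k = 0 := fun k hk ↦ by simp [hs k hk]
  rw [two_mul]
  convert (add_smul_left x hx (h p) a b).trans (add_smul_left y hy (h q) _ _) using 2
  · ext k
    simp [hs y hy, ← hβ]
    ring
  · simp [hs x hx, smul_add, ← Pi.single_smul, mul_comm, sub_sub]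

theorem Reach.add_smul_right₂ {x y : ι} {p q : R} (hβ : p * a x + q * a y = β) {s : ι → R}
    {S : Finset ι} (hx : x ∉ S) (hy : y ∉ S) (hs : ∀ k ∉ S, s k = 0) :
    Reach (2 * S.card) (a ⊕ᵥ b)
      (a ⊕ᵥ (b + β • s - (s ⬝ᵥ a) • (Pi.single x p + Pi.single y q))) := by
  have h (r : R) : ∀ k ∉ S, (r • s) k = 0 := fun k hk ↦ by simp [hs k hk]
  rw [two_mul]
  convert ((add_smul_right x hx (h p) b a).trans (add_smul_right y hy (h q) _ a)).elim_swap using 2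
  simp only [← hβ, add_smul, smul_add, smul_dotProduct, ← Pi.single_smul, smul_smul, smul_eq_mul,
    mul_comm]
  abel

/-- Since `a` and `a'` agree at `x` and `y`, where they generate `β`, the other coordinates can be
corrected by `β` times anything, at the cost of disturbing `b` at `x` and `y` only. -/
theorem exists_reach_of_dvd {x y : ι} (hxy : x ≠ y) {η p q : R} (hβ : p * a' x + q * a' y = β)
    (hx : a x = a' x) (hy : a y = a' y) (ha : ∀ k, η * β ∣ a' k - a k)
    (hb : ∀ k, η * β ∣ b' k - b k) :
    ∃ b₁ : ι → R, Reach (4 * (Fintype.card ι - 2)) (a ⊕ᵥ b) (a' ⊕ᵥ b₁) ∧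
      (∀ k, k ≠ x → k ≠ y → b₁ k = b' k) ∧ ∀ k, η ∣ b' k - b₁ k := by
  choose s hs using ha
  choose t ht using hb
  set S : Finset ι := Finset.univ \ {x, y}
  have hxS : x ∉ S := by simp [S]
  have hyS : y ∉ S := by simp [S]
  have hsupp (f : ι → R) : ∀ k ∉ S, (S.piecewise (η • f) 0) k = 0 := fun k hk ↦ by simp [hk]
  have hdvd (f v : ι → R) : η ∣ S.piecewise (η • f) 0 ⬝ᵥ v := Finset.dvd_sum fun k _ ↦ by
    by_cases hk : k ∈ S <;> simp [hk, mul_assoc]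
  have hcard : S.card = Fintype.card ι - 2 := by
    rw [Finset.card_univ_sdiff, Finset.card_pair hxy]
  have h₁ := Reach.add_smul_left₂ (b := b) (hx ▸ hy ▸ hβ) hxS hyS (hsupp s)
  have ha' : a + β • S.piecewise (η • s) 0 = a' := by
    ext k
    by_cases hk : k ∈ S
    · simp [hk]
      linear_combination -hs k
    · obtain rfl | rfl : k = x ∨ k = y := by simpa [S, or_iff_not_imp_left] using hk
      · simp [hxS, hx]
      · simp [hyS, hy]
  rw [ha'] at h₁
  refine ⟨_, (h₁.trans (Reach.add_smul_right₂ hβ hxS hyS (hsupp t))).mono (by omega),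
    fun k hkx hky ↦ ?_, fun k ↦ ?_⟩
  · have hk : k ∈ S := by simp [S, hkx, hky]
    simp [hk, hkx, hky]
    linear_combination -ht k
  · have hpw : η ∣ S.piecewise (η • t) 0 k := by by_cases hk : k ∈ S <;> simp [hk]
    have hη : η ∣ b' k - b k := ht k ▸ mul_assoc η β _ ▸ dvd_mul_right _ _
    set w : ι → R := Pi.single x p + Pi.single y q
    convert ((hη.add ((hdvd s b).mul_right (w k))).sub (hpw.mul_left β)).add
      ((hdvd t a').mul_right (w k)) using 1
    simp only [Pi.sub_apply, Pi.add_apply, Pi.smul_apply, smul_eq_mul]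
    ring

theorem Reach.of_pow_dvd {x y : ι} (hxy : x ≠ y) {K : ℕ} {p q : R}
    (hβ : p * a x + q * a y = β) (hann : ∀ c : R, β ^ (K + 1) * c = 0 → β ^ K * c = 0)
    (hb : ∀ k, k ≠ x → k ≠ y → b k = b' k) (hb' : ∀ k, β ^ (K + 1) ∣ b' k - b k)
    (hab : a ⬝ᵥ b = a ⬝ᵥ b') :
    Reach 1 (a ⊕ᵥ b) (a ⊕ᵥ b') := by
  obtain ⟨f, hf⟩ := hb' x
  obtain ⟨g, hg⟩ := hb' y
  have hsingle : b' = b + Pi.single x (β ^ (K + 1) * f) + Pi.single y (β ^ (K + 1) * g) := by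
    ext k
    by_cases hkx : k = x
    · subst hkx; simp [← hf, hxy]
    by_cases hky : k = y
    · subst hky; simp [← hg, hkx]
    simp [hkx, hky, hb]
  have hfg : β ^ K * (a x * f + a y * g) = 0 := hann _ <| by
    rw [hsingle] at hab
    simp only [dotProduct_add, dotProduct_single] at hab
    linear_combination -hab
  convert (add_single_sub_single b a hxy (β ^ K * (q * f - p * g))).elim_swap using 2
  rw [hsingle, sub_eq_add_neg, ← Pi.single_neg]
  congr 2
  · congr 1
    linear_combination (-β ^ K * f) * hβ + p * hfg
  · linear_combination (-β ^ K * g) * hβ + q * hfg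

theorem Reach.of_congruent (c : Fin 3 ↪ ι) {K : ℕ} {p q p' q' : R}
    (hann : ∀ r : R, β ^ (K + 1) * r = 0 → β ^ K * r = 0)
    (hβ : p * a (c 0) + q * a (c 1) = β) (hβ' : p' * a' (c 0) + q' * a' (c 1) = β)
    (ha : ∀ k, β ^ (K + 4) ∣ a' k - a k) (hb : ∀ k, β ^ (K + 4) ∣ b' k - b k)
    (hab : a ⬝ᵥ b = 0) (hab' : a' ⬝ᵥ b' = 0) :
    Reach (4 * Fintype.card ι + 5) (a ⊕ᵥ b) (a' ⊕ᵥ b') := by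
  have hc : c 0 ≠ c 1 := c.injective.ne (by decide)
  obtain ⟨a₁, b₁, h₁, hx, hy, ha₁, hb₁⟩ :=
    exists_reach_eq_and_eq_of_dvd (ε := β ^ (K + 2)) c hβ (by simpa only [← pow_add] using ha)
      fun k ↦ (pow_dvd_pow β (by omega)).trans (hb k)
  obtain ⟨b₂, h₂, hb₂, hdvd⟩ :=
    exists_reach_of_dvd (η := β ^ (K + 1)) hc hβ' hx hy (by simpa only [← pow_succ] using ha₁)
      (by simpa only [← pow_succ] using hb₁)
  have hform : hypForm (a' ⊕ᵥ b₂) = hypForm (a ⊕ᵥ b) := (h₁.trans h₂).hypForm_eq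
  have h₃ := of_pow_dvd hc hβ' hann hb₂ hdvd (hform.trans (hab.trans hab'.symm))
  have hcard : 3 ≤ Fintype.card ι := by
    simpa using Fintype.card_le_of_embedding c
  exact ((h₁.trans h₂).trans h₃).mono (by omega)

end CongruentColumns

section PrimesAbove

open Polynomial

variable {A : Type*} [CommRing A]

/-- The primes of `A[X]` that contain `f` and contract to a member of `T`. -/
def primesAbove (f : A[X]) (T : Set (Ideal A)) : Set (Ideal A[X]) :=
  {Q | Q.IsPrime ∧ f ∈ Q ∧ Q.comap C ∈ T}

theorem eq_of_le_of_comap_C_le {f : A[X]} (hf : f.Monic) {P Q : Ideal A[X]} [hP : P.IsPrime]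
    (hfP : f ∈ P) (hle : P ≤ Q) (hcomap : Q.comap C ≤ P.comap C) : P = Q := by
  by_contra hne
  obtain ⟨r, hrQ, hrP⟩ := SetLike.exists_of_lt (hle.lt_of_ne hne)
  obtain ⟨g, hg, hgr⟩ :=
    hf.quotient_isIntegral (Ideal.mem_span_singleton_self f) (Ideal.Quotient.mk _ r)
  have hgP : g.eval₂ C r ∈ P := by
    refine (Ideal.span_singleton_le_iff_mem P).2 hfP (Ideal.Quotient.eq_zero_iff_mem.1 ?_)
    rw [hom_eval₂]
    exact hgr
  have : Nontrivial (A ⧸ P.comap C) := Ideal.Quotient.nontrivial_iff.2 (hP.comap C).ne_top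
  exact hcomap.not_gt
    (Ideal.comap_lt_comap_of_root_mem_sdiff hle ⟨hrQ, hrP⟩ (hg.map _).ne_zero hgP)

variable {f : A[X]} {T : Set (Ideal A)}

theorem isAntichain_primesAbove (hf : f.Monic) (hT : IsAntichain (· ≤ ·) T) :
    IsAntichain (· ≤ ·) (primesAbove f T) := by
  rintro P ⟨_, hfP, hPT⟩ Q ⟨_, _, hQT⟩ hne hle
  exact hne (eq_of_le_of_comap_C_le hf hfP hle (hT.eq hPT hQT (Ideal.comap_mono hle)).ge)

theorem finite_primesAbove [IsNoetherianRing A] (hf : f.Monic) (hT : T.Finite) :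
    (primesAbove f T).Finite := by
  refine (hT.biUnion (t := fun p ↦ (p.map C ⊔ Ideal.span {f}).minimalPrimes)
    fun p _ ↦ Ideal.finite_minimalPrimes_of_isNoetherianRing _ _).subset ?_
  rintro Q ⟨hQ, hfQ, hQT⟩
  refine Set.mem_biUnion hQT ⟨⟨hQ, sup_le Ideal.map_comap_le ?_⟩, fun P ⟨hP, hmap⟩ hPQ ↦ ?_⟩
  · rwa [Ideal.span_singleton_le_iff_mem]
  · have hfP : f ∈ P := hmap (Ideal.mem_sup_right (Ideal.mem_span_singleton_self f))
    exact (eq_of_le_of_comap_C_le hf hfP hPQ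
      (Ideal.map_le_iff_le_comap.1 (le_sup_left.trans hmap))).ge

theorem exists_comap_C_eq_of_comap_C_le (hf : f.Monic) {I : Ideal A[X]} (hfI : f ∈ I)
    (p : Ideal A) [p.IsPrime] (hp : I.comap C ≤ p) :
    ∃ Q : Ideal A[X], Q.IsPrime ∧ I ≤ Q ∧ Q.comap C = p := by
  set φ := Ideal.Quotient.mk (Ideal.span {f})
  have : Algebra.IsIntegral A (A[X] ⧸ Ideal.span {f}) :=
    ⟨fun z ↦ hf.quotient_isIntegral (Ideal.mem_span_singleton_self f) z⟩
  have hI : (I.map φ).comap φ = I := by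
    rwa [Ideal.comap_map_of_surjective _ Ideal.Quotient.mk_surjective, sup_eq_left,
      ← RingHom.ker_eq_comap_bot, Ideal.mk_ker, Ideal.span_singleton_le_iff_mem]
  obtain ⟨Q, hIQ, hQ, hQp⟩ := Ideal.exists_ideal_over_prime_of_isIntegral p (I.map φ)
    ((congrArg (Ideal.comap C) hI).le.trans hp)
  exact ⟨Q.comap φ, inferInstance, hI.ge.trans (Ideal.comap_mono hIQ), hQp⟩

theorem exists_mul_add_mul_eq_C (hf : f.Monic) (hT : T.Finite) (hprime : ∀ p ∈ T, p.IsPrime)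
    {g : A[X]} (hg : ∀ Q ∈ primesAbove f T, g ∉ Q) :
    ∃ β : A, (∀ p ∈ T, β ∉ p) ∧ ∃ u v : A[X], u * f + v * g = C β := by
  have hsub : ¬ ((Ideal.span {f, g}).comap C : Set A) ⊆ ⋃ p ∈ T, (p : Set A) := by
    intro hle
    obtain ⟨p, hpT, hp⟩ := (Ideal.subset_union_prime_finite hT (f := id) ⊥ ⊥
      fun p hp _ _ ↦ hprime p hp).1 hle
    have := hprime p hpT
    obtain ⟨Q, hQ, hle, rfl⟩ :=
      exists_comap_C_eq_of_comap_C_le hf (Ideal.subset_span (Set.mem_insert f _)) p hp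
    rw [Ideal.span_le, Set.pair_subset_iff] at hle
    exact hg Q ⟨hQ, hle.1, hpT⟩ hle.2
  obtain ⟨β, hβ, hβT⟩ := Set.not_subset.1 hsub
  exact ⟨β, fun p hp h ↦ hβT (Set.mem_biUnion hp h), Ideal.mem_span_pair.1 hβ⟩

theorem exists_monic_add_X_pow_mul (g : A[X]) (hf : f.Monic) : ∃ N, (g + X ^ N * f).Monic := by
  nontriviality A
  refine ⟨g.natDegree + 1, ((monic_X_pow _).mul hf).add_of_right (degree_lt_degree ?_)⟩
  rw [(monic_X_pow _).natDegree_mul hf, natDegree_X_pow]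
  omega

end PrimesAbove

section Separation

variable {R ι : Type*} [CommRing R] [DecidableEq ι] [Fintype ι] {F : Set (Ideal R)}

theorem exists_reach_forall_mem_imp_right (hF : F.Finite) (hprime : ∀ Q ∈ F, Q.IsPrime)
    (hanti : IsAntichain (· ≤ ·) F) (a b : ι → R) {x y : ι} (hxy : x ≠ y) {S : Finset ι}
    (hx : x ∉ S) (hy : y ∉ S) :
    ∃ a' : ι → R, Reach S.card (a ⊕ᵥ b) (a' ⊕ᵥ b) ∧ a' x = a x ∧
      ∀ Q ∈ F, (∀ i ≠ x, a' i ∈ Q) → (∀ i ≠ x, a i ∈ Q) ∧ ∀ j ∈ S, b j ∈ Q ∧ b y ∈ Q := by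
  induction S using Finset.induction_on with
  | empty => exact ⟨a, .refl _ _, rfl, by simp⟩
  | insert j S hj ih =>
    simp only [Finset.mem_insert, not_or] at hx hy
    obtain ⟨a₁, h₁, hx₁, hQ₁⟩ := ih hx.2 hy.2
    set w : ι → R := Pi.single y (b j) - Pi.single j (b y)
    obtain ⟨ξ, hξ⟩ := exists_forall_add_mul_mem_imp hF hprime hanti
      (fun i : {i // i ≠ x} ↦ a₁ i) (fun i ↦ w i)
    refine ⟨a₁ + ξ • w, ?_, by simp [w, hx.1, hxy, hx₁], fun Q hQ h ↦ ?_⟩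
    · rw [Finset.card_insert_of_notMem hj]
      convert h₁.trans (Reach.add_single_sub_single a₁ b hy.1 ξ) using 2
      simp [w, smul_sub, ← Pi.single_smul, add_sub_assoc]
    · have hmem := hξ Q hQ fun i ↦ h i i.2
      obtain ⟨ha, hb⟩ := hQ₁ Q hQ fun i hi ↦ (hmem ⟨i, hi⟩).1
      have hwy := (hmem ⟨y, hxy.symm⟩).2
      have hwj := (hmem ⟨j, Ne.symm hx.1⟩).2
      simp only [w, Pi.sub_apply, Pi.single_eq_same, Pi.single_eq_of_ne hy.1,
        Pi.single_eq_of_ne (Ne.symm hy.1), sub_zero, zero_sub, neg_mem_iff] at hwy hwj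
      exact ⟨ha, Finset.forall_mem_insert _ _ _ |>.2 ⟨⟨hwy, hwj⟩, hb⟩⟩

theorem exists_reach_forall_mem_imp_left (hF : F.Finite) (hprime : ∀ Q ∈ F, Q.IsPrime)
    (hanti : IsAntichain (· ≤ ·) F) (a b : ι → R) {y : ι} {S : Finset ι} (hy : y ∉ S) :
    ∃ a' b' : ι → R, Reach S.card (a ⊕ᵥ b) (a' ⊕ᵥ b') ∧ (∀ i ≠ y, a' i = a i) ∧
      ∀ Q ∈ F, a' y ∈ Q → a y ∈ Q ∧ ∀ j ∈ S, a j ∈ Q := by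
  induction S using Finset.induction_on with
  | empty => exact ⟨a, b, .refl _ _, fun _ _ ↦ rfl, by simp⟩
  | insert j S hj ih =>
    simp only [Finset.mem_insert, not_or] at hy
    obtain ⟨a₁, b₁, h₁, ha₁, hQ₁⟩ := ih hy.2
    obtain ⟨ξ, hξ⟩ := exists_add_mul_mem_imp hF hprime hanti (a₁ y) (a j)
    have h₂ := Reach.add_smul_left j (S := {y}) (ξ := Pi.single y ξ)
      (by simpa using Ne.symm hy.1) (by simp +contextual) a₁ b₁
    refine ⟨_, _, Finset.card_insert_of_notMem hj ▸ h₁.trans h₂, fun i hi ↦ ?_, fun Q hQ h ↦ ?_⟩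
    · simp [hi, ha₁]
    · rw [Pi.add_apply, Pi.smul_apply, Pi.single_eq_same, smul_eq_mul, mul_comm,
        ha₁ j (Ne.symm hy.1)] at h
      obtain ⟨hay, haj⟩ := hξ Q hQ h
      obtain ⟨h₁y, h₁S⟩ := hQ₁ Q hQ hay
      exact ⟨h₁y, Finset.forall_mem_insert _ _ _ |>.2 ⟨haj, h₁S⟩⟩

theorem exists_reach_eq_and_notMem (hF : F.Finite) (hprime : ∀ Q ∈ F, Q.IsPrime)
    (hanti : IsAntichain (· ≤ ·) F) (hcard : 3 ≤ Fintype.card ι) {a b : ι → R} {x y : ι}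
    (hxy : x ≠ y) (hab : ∀ Q ∈ F, (∀ i ≠ x, a i ∈ Q) → ¬ ∀ i ≠ x, b i ∈ Q) :
    ∃ a' b' : ι → R, Reach (2 * (Fintype.card ι - 2)) (a ⊕ᵥ b) (a' ⊕ᵥ b') ∧ a' x = a x ∧
      ∀ Q ∈ F, a' y ∉ Q := by
  set S : Finset ι := Finset.univ \ {x, y}
  have hS : S.card = Fintype.card ι - 2 := by
    rw [Finset.card_univ_sdiff, Finset.card_pair hxy]
  have hxS : x ∉ S := by simp [S]
  have hyS : y ∉ S := by simp [S]
  have hmem {i : ι} (hx : i ≠ x) (hy : i ≠ y) : i ∈ S := by simp [S, hx, hy]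
  obtain ⟨a₁, h₁, hx₁, hQ₁⟩ :=
    exists_reach_forall_mem_imp_right hF hprime hanti a b hxy hxS hyS
  obtain ⟨a₂, b₂, h₂, ha₂, hQ₂⟩ :=
    exists_reach_forall_mem_imp_left hF hprime hanti a₁ b hyS
  refine ⟨a₂, b₂, (h₁.trans h₂).mono (by omega), (ha₂ x hxy).trans hx₁, fun Q hQ h ↦ ?_⟩
  obtain ⟨hy, hSa⟩ := hQ₂ Q hQ h
  have ha₁ : ∀ i ≠ x, a₁ i ∈ Q := fun i hi ↦ by
    obtain rfl | hiy := eq_or_ne i y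
    exacts [hy, hSa i (hmem hi hiy)]
  obtain ⟨ha, hb⟩ := hQ₁ Q hQ ha₁
  obtain ⟨j, hj⟩ : S.Nonempty := Finset.card_pos.1 (by omega)
  refine hab Q hQ ha fun i hi ↦ ?_
  obtain rfl | hiy := eq_or_ne i y
  exacts [(hb j hj).2, (hb i (hmem hi hiy)).1]

end Separation

section LocalReduction

open Polynomial

variable {A ι : Type*} [CommRing A] [IsNoetherianRing A] [DecidableEq ι] [Fintype ι]
  {a b : ι → A[X]} {x y : ι} {T : Set (Ideal A)}

theorem exists_reach_monic_and_not_forall_mem (hab : Ideal.span (Set.range (a ⊕ᵥ b)) = ⊤)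
    (hxy : x ≠ y) (hx : (a x).Monic) (hy : (a y).Monic) (hT : T.Finite)
    (hanti : IsAntichain (· ≤ ·) T) :
    ∃ a' b' : ι → A[X], Reach 1 (a ⊕ᵥ b) (a' ⊕ᵥ b') ∧ (a' x).Monic ∧
      ∀ Q ∈ primesAbove (a' x) T, (∀ i ≠ x, a' i ∈ Q) → ¬ ∀ i ≠ x, b' i ∈ Q := by
  obtain ⟨ξ, hξ⟩ := exists_add_mul_mem_imp (finite_primesAbove hx hT) (fun Q hQ ↦ hQ.1)
    (isAntichain_primesAbove hx hanti) (b y) (-b x)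
  obtain ⟨N, hN⟩ := exists_monic_add_X_pow_mul (a x + ξ * a y) (hx.mul hy)
  set s : ι → A[X] := Pi.single x (ξ + X ^ N * a x)
  have h := Reach.add_smul_left y (S := {x}) (ξ := s) (by simpa using hxy.symm)
    (by simp +contextual [s]) a b
  set a' := a + a y • s
  set b' := b - Pi.single y (s ⬝ᵥ b)
  have ha' : ∀ i ≠ x, a' i = a i := fun i hi ↦ by simp [a', s, hi]
  have hx' : a' x = a x + ξ * a y + X ^ N * (a x * a y) := by simp [a', s]; ring
  have hb' : ∀ i ≠ y, b' i = b i := fun i hi ↦ by simp [b', hi]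
  have hy' : b' y = b y + ξ * -b x - X ^ N * b x * a x := by simp [b', s]; ring
  refine ⟨a', b', h, hx' ▸ hN, ?_⟩
  rintro Q ⟨hQ, hxQ, hQT⟩ hQa hQb
  have ha : ∀ i ≠ x, a i ∈ Q := fun i hi ↦ ha' i hi ▸ hQa i hi
  have hax : a x ∈ Q := by
    have : a x = a' x - (ξ + X ^ N * a x) * a y := by rw [hx']; ring
    exact this ▸ Q.sub_mem hxQ (Q.mul_mem_left _ (ha y hxy.symm))
  obtain ⟨hby, hbx⟩ := hξ Q ⟨hQ, hax, hQT⟩ <| by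
    have : b y + ξ * -b x = b' y + X ^ N * b x * a x := by rw [hy']; ring
    exact this ▸ Q.add_mem (hQb y hxy.symm) (Q.mul_mem_left _ hax)
  refine hQ.ne_top (top_le_iff.1 (hab ▸ Ideal.span_le.2 ?_))
  rintro _ ⟨i | i, rfl⟩
  · obtain rfl | hi := eq_or_ne i x
    exacts [hax, ha i hi]
  · change b i ∈ Q
    obtain rfl | hiy := eq_or_ne i y
    · exact hby
    obtain rfl | hix := eq_or_ne i x
    exacts [neg_mem_iff.1 hbx, hb' i hiy ▸ hQb i hix]

theorem exists_reach_mul_add_mul_eq_C (hcard : 3 ≤ Fintype.card ι)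
    (hab : Ideal.span (Set.range (a ⊕ᵥ b)) = ⊤) (hxy : x ≠ y) (hx : (a x).Monic)
    (hy : (a y).Monic) (hT : T.Finite) (hprime : ∀ p ∈ T, p.IsPrime)
    (hanti : IsAntichain (· ≤ ·) T) :
    ∃ a' b' : ι → A[X], Reach (2 * Fintype.card ι - 3) (a ⊕ᵥ b) (a' ⊕ᵥ b') ∧
      ∃ β : A, (∀ p ∈ T, β ∉ p) ∧ ∃ u v : A[X], u * a' x + v * a' y = C β := by
  obtain ⟨a₁, b₁, h₁, hx₁, hQ₁⟩ :=
    exists_reach_monic_and_not_forall_mem hab hxy hx hy hT hanti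
  obtain ⟨a₂, b₂, h₂, hx₂, hQ₂⟩ := exists_reach_eq_and_notMem (finite_primesAbove hx₁ hT)
    (fun Q hQ ↦ hQ.1) (isAntichain_primesAbove hx₁ hanti) hcard hxy hQ₁
  refine ⟨a₂, b₂, (h₁.trans h₂).mono (by omega), ?_⟩
  rw [hx₂]
  exact exists_mul_add_mul_eq_C hx₁ hT hprime hQ₂

end LocalReduction

section Homotopy

theorem hypForm_comp {R S ι : Type*} [CommRing R] [CommRing S] [Fintype ι] (f : R →+* S)
    (v : ι ⊕ ι → R) : hypForm (f ∘ v) = f (hypForm v) := by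
  simp [hypForm]

theorem span_range_comp_eq_top {R S κ : Type*} [CommRing R] [CommRing S] (f : R →+* S)
    {v : κ → R} (hv : Ideal.span (Set.range v) = ⊤) : Ideal.span (Set.range (f ∘ v)) = ⊤ := by
  rw [Set.range_comp, ← Ideal.map_span, hv, Ideal.map_top]

theorem exists_forall_pow_succ_mul_eq_zero {A : Type*} [CommRing A] [IsNoetherianRing A] (β : A) :
    ∃ K, ∀ c, β ^ (K + 1) * c = 0 → β ^ K * c = 0 := by
  obtain ⟨K, hK⟩ := monotone_stabilizes_iff_noetherian.2 (inferInstanceAs (IsNoetherian A A))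
    (LinearMap.mulLeft A β).iterateKer
  refine ⟨K, fun c hc ↦ ?_⟩
  have h := hK (K + 1) K.le_succ
  simp only [LinearMap.iterateKer_coe, LinearMap.pow_mulLeft] at h
  exact h.ge hc

open Polynomial

variable {A ι : Type*} [CommRing A] [IsNoetherianRing A] [DecidableEq ι] [Fintype ι]
  {v : ι ⊕ ι → A[X]} (c : Fin 3 ↪ ι)

theorem exists_forall_reach_eval_of_pow_dvd_sub {m : ℕ} {a b : ι → A[X]}
    (hv : hypForm v = 0) (h : Reach m v (a ⊕ᵥ b)) {β : A} {p q : A[X]}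
    (hβ : p * a (c 0) + q * a (c 1) = C β) :
    ∃ L, ∀ σ τ : A, β ^ L ∣ τ - σ →
      Reach (2 * m + (4 * Fintype.card ι + 5)) (eval σ ∘ v) (eval τ ∘ v) := by
  obtain ⟨K, hK⟩ := exists_forall_pow_succ_mul_eq_zero β
  refine ⟨K + 4, fun σ τ hdvd ↦ ?_⟩
  have hdvd_eval (f : A[X]) : β ^ (K + 4) ∣ f.eval τ - f.eval σ :=
    hdvd.trans (sub_dvd_eval_sub τ σ f)
  have hβ_eval (τ : A) : p.eval τ * (a (c 0)).eval τ + q.eval τ * (a (c 1)).eval τ = β := by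
    simpa using congrArg (eval τ) hβ
  have hform (τ : A) : (eval τ ∘ a) ⬝ᵥ (eval τ ∘ b) = 0 := by
    have := hypForm_comp (evalRingHom τ) (a ⊕ᵥ b)
    rw [h.hypForm_eq, hv, map_zero] at this
    exact this
  have hmap (τ : A) : Reach m (eval τ ∘ v) ((eval τ ∘ a) ⊕ᵥ (eval τ ∘ b)) :=
    Sum.comp_elim (eval τ) a b ▸ h.map (evalRingHom τ)
  have hmid := Reach.of_congruent c hK (hβ_eval σ) (hβ_eval τ) (fun k ↦ hdvd_eval (a k))
    (fun k ↦ hdvd_eval (b k)) (hform σ) (hform τ)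
  exact (((hmap σ).trans hmid).trans (hmap τ).symm).mono (by omega)

theorem reach_eval_of_monic {d : ℕ} (hd : ringKrullDim A ≤ d)
    (hspan : Ideal.span (Set.range v) = ⊤) (hv : hypForm v = 0) (hx : (v (.inl (c 0))).Monic)
    (hy : (v (.inl (c 1))).Monic) (σ τ : A) :
    Reach ((d + 1) * (8 * Fintype.card ι - 1)) (eval σ ∘ v) (eval τ ∘ v) := by
  have hcard : 3 ≤ Fintype.card ι := by simpa using Fintype.card_le_of_embedding c
  set N := 8 * Fintype.card ι - 1
  obtain ⟨β, hβ, hβspan⟩ := exists_span_range_eq_top hd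
    (fun β ↦ ∃ L, ∀ σ τ : A, β ^ L ∣ τ - σ → Reach N (eval σ ∘ v) (eval τ ∘ v))
    fun T hT hprime hanti ↦ by
      obtain ⟨a, b, h, β, hβT, p, q, hpq⟩ := exists_reach_mul_add_mul_eq_C
        (a := v ∘ .inl) (b := v ∘ .inr) hcard (by rwa [Sum.elim_comp_inl_inr])
        (c.injective.ne (by decide : (0 : Fin 3) ≠ 1)) hx hy hT hprime hanti
      rw [Sum.elim_comp_inl_inr] at h
      obtain ⟨L, hL⟩ := exists_forall_reach_eval_of_pow_dvd_sub c hv h hpq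
      exact ⟨β, ⟨L, fun σ τ hστ ↦ (hL σ τ hστ).mono (by omega)⟩, hβT⟩
  choose L hL using hβ
  set M := Finset.univ.sup L
  have hM : τ - σ ∈ Ideal.span (Set.range fun i ↦ β i ^ M) := by
    have := Ideal.span_pow_eq_top _ hβspan M
    rw [← Set.range_comp] at this
    exact this ▸ Submodule.mem_top
  obtain ⟨r, hr⟩ := Ideal.mem_span_range_iff_exists_fun.1 hM
  have hsum (S : Finset (Fin (d + 1))) :
      Reach (S.card * N) (eval σ ∘ v) (eval (σ + ∑ i ∈ S, r i * β i ^ M) ∘ v) := by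
    induction S using Finset.induction_on with
    | empty => simpa using Reach.refl 0 (eval σ ∘ v)
    | insert j S hj ih =>
      rw [Finset.card_insert_of_notMem hj, add_one_mul, Finset.sum_insert hj]
      refine ih.trans (hL j _ _ ?_)
      rw [add_sub_add_left_eq_sub, add_sub_cancel_right]
      exact (pow_dvd_pow _ (Finset.le_sup (Finset.mem_univ j))).mul_left _
  simpa [hr] using hsum Finset.univ

end Homotopy

section ColumnReduction

variable {R ι : Type*} [CommRing R] [DecidableEq ι] [Fintype ι]

theorem exists_isElementary_mulVec_eq_single {v : ι ⊕ ι → R} {p : ι ⊕ ι} (hp : v p = 1)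
    (hv : hypForm v = 0) :
    ∃ E, IsElementary (2 * (Fintype.card ι - 1)) E ∧ E *ᵥ v = Pi.single p 1 ∧
      E *ᵥ Pi.single p.swap 1 = Pi.single p.swap 1 := by
  set K : Finset ι := Finset.univ.erase (p.elim id id)
  have hK : K.card = Fintype.card ι - 1 := Finset.card_erase_of_mem (Finset.mem_univ _)
  obtain ⟨E, hE, hEv⟩ := exists_isElementary_mulVec_eq p (-v) (K.map .inl)
    (by cases p <;> simp [K]) (by cases p <;> simp [K]) (by simp)
  obtain ⟨F, hF, hFv⟩ := exists_isElementary_mulVec_eq p (-v) (K.map .inr)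
    (by cases p <;> simp [K]) (by cases p <;> simp [K]) (by simp)
  rw [Finset.card_map, hK] at hE hF
  have hFE := hF.mul hE
  rw [← two_mul] at hFE
  have hclear : ∃ c, (F * E) *ᵥ v = Pi.single p 1 + Pi.single p.swap c := by
    refine ⟨((F * E) *ᵥ v) p.swap, ?_⟩
    rw [← mulVec_mulVec, hFv, hEv]
    ext i
    rcases p with p | p <;> rcases i with i | i <;> rcases eq_or_ne i p with rfl | hi <;>
      simp_all [Pi.single_apply, Finset.sum_apply, K]
  obtain ⟨c, hc⟩ := hclear
  have hc0 : c = 0 := by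
    have := hFE.hypForm_mulVec v
    rw [hc, hv, hypForm_add_single] at this
    rcases p with p | p <;> simpa [hypForm, Pi.single_apply] using this
  refine ⟨F * E, hFE, by simpa [hc0] using hc, ?_⟩
  have hfix : E *ᵥ Pi.single p.swap 1 = Pi.single p.swap 1 := by
    rw [hEv]
    rcases p with p | p <;> simp [K, Pi.single_apply]
  rw [← mulVec_mulVec, hfix, hFv]
  rcases p with p | p <;> simp [K, Pi.single_apply]

omit [DecidableEq ι] in
theorem exists_dotProduct_eq_of_mem_span {a : ι → R} {k : ι} {f : R}
    (hf : f ∈ Ideal.span (a '' {j | j ≠ k})) : ∃ η : ι → R, η k = 0 ∧ η ⬝ᵥ a = f := by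
  classical
  have hle : Ideal.span (a '' {j | j ≠ k}) ≤
      Ideal.span (Set.range (Function.update a k 0)) := by
    rw [Ideal.span_le]
    rintro _ ⟨j, hj, rfl⟩
    exact Ideal.subset_span ⟨j, Function.update_of_ne hj _ _⟩
  obtain ⟨η, hη⟩ := Ideal.mem_span_range_iff_exists_fun.1 (hle hf)
  refine ⟨Function.update η k 0, Function.update_self _ _ _, hη ▸ Finset.sum_congr rfl ?_⟩
  intro j _
  rcases eq_or_ne j k with rfl | hj <;> simp [*]

theorem Reach.add_single_dotProduct {k : ι} {η : ι → R} (hη : η k = 0) (a b : ι → R) :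
    Reach (Fintype.card ι - 1) (a ⊕ᵥ b) ((a + Pi.single k (η ⬝ᵥ a)) ⊕ᵥ (b - b k • η)) := by
  have h := (Reach.add_smul_left (ξ := -η) k (Finset.notMem_erase k Finset.univ)
    (by simp [hη]) b a).elim_swap
  rw [Finset.card_erase_of_mem (Finset.mem_univ k), Finset.card_univ] at h
  simpa [sub_eq_add_neg, ← Pi.single_neg] using h

theorem reach_single_of_ringKrullDim_le [IsNoetherianRing R] {d : ℕ} (hd : ringKrullDim R ≤ d)
    (hcard : d + 2 ≤ Fintype.card ι) {v : ι ⊕ ι → R} (hspan : Ideal.span (Set.range v) = ⊤)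
    (hv : hypForm v = 0) (k : ι) :
    Reach (Fintype.card ι * (2 * (Fintype.card ι - 1)) + 3 * (Fintype.card ι - 1)) v
      (Pi.single (.inl k) 1) := by
  obtain ⟨a, b, h, hab⟩ := exists_reach_forall_le_height (v ∘ .inl) (v ∘ .inr)
    (by rwa [Sum.elim_comp_inl_inr]) k
  rw [Sum.elim_comp_inl_inr] at h
  have htop : Ideal.span (a '' {j | j ≠ k}) = ⊤ := by
    by_contra hne
    obtain ⟨M, hM, hle⟩ := Ideal.exists_le_maximal _ hne
    have hMd := (hab M hM.isPrime fun j hj ↦ hle (Ideal.subset_span ⟨j, hj, rfl⟩)).trans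
      (height_le_of_ringKrullDim_le hd M)
    have : Fintype.card ι - 1 ≤ d := by exact_mod_cast hMd
    omega
  obtain ⟨η, hη, hηa⟩ := exists_dotProduct_eq_of_mem_span
    (htop ▸ Submodule.mem_top : 1 - a k ∈ Ideal.span (a '' {j | j ≠ k}))
  have h₁ := h.trans (.add_single_dotProduct hη a b)
  obtain ⟨E, hE, hEv, -⟩ := exists_isElementary_mulVec_eq_single (p := .inl k)
    (by simp [hηa]) (h₁.hypForm_eq.trans hv)
  exact (h₁.trans ⟨E, hE, hEv⟩).mono (by omega)

open Polynomial

theorem exists_reach_monic {k l : ι} (hkl : k ≠ l) {v : ι ⊕ ι → R[X]} {η : ι → R[X]}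
    (hη : η k = 0) (hmonic : (η ⬝ᵥ (v ∘ .inl)).Monic) :
    ∃ w, Reach (Fintype.card ι) v w ∧ (w (.inl k)).Monic ∧ (w (.inl l)).Monic := by
  obtain ⟨N, hN⟩ := exists_monic_add_X_pow_mul (v (.inl k)) hmonic
  have hη' : ((X : R[X]) ^ N • η) k = 0 := by simp [hη]
  have h := Reach.add_single_dotProduct hη' (v ∘ .inl) (v ∘ .inr)
  rw [Sum.elim_comp_inl_inr, smul_dotProduct, smul_eq_mul] at h
  set w := (v ∘ Sum.inl + Pi.single k ((X : R[X]) ^ N * η ⬝ᵥ (v ∘ .inl))) ⊕ᵥ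
    (v ∘ Sum.inr - (v ∘ Sum.inr) k • (X : R[X]) ^ N • η)
  have hwk : (w (.inl k)).Monic := by simpa [w] using hN
  obtain ⟨N', hN'⟩ := exists_monic_add_X_pow_mul (w (.inl l)) hwk
  have hcard : 0 < Fintype.card ι := Fintype.card_pos_iff.2 ⟨k⟩
  have hlk : Sum.inl (β := ι) l ≠ .inl k := Sum.inl_injective.ne hkl.symm
  refine ⟨_, (h.trans ⟨_, .of_transv hlk Sum.inl_ne_inr (X ^ N'), rfl⟩).mono (by omega), ?_, ?_⟩
  · simpa [transv_mulVec, hkl] using hwk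
  · simpa [transv_mulVec] using hN'

section SuslinEval

variable {C σ : Type*} [CommRing C] (k : σ → ℕ)

theorem eval_one_suslinHom (f : MvPolynomial σ C) :
    (suslinHom k (MvPolynomial.X - 1 : σ → MvPolynomial σ C) f).eval 1 = f := by
  have : ((aeval (1 : MvPolynomial σ C)).restrictScalars C).comp
      (suslinHom k (MvPolynomial.X - 1 : σ → MvPolynomial σ C)) = AlgHom.id C _ :=
    MvPolynomial.algHom_ext fun i ↦ by simp [suslinHom]
  simpa [aeval_def] using congr($this f)

theorem eval_zero_suslinHom {S : Type*} [CommRing S] [Algebra C S] (hk : ∀ i, k i ≠ 0)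
    (s : σ → S) (f : MvPolynomial σ C) :
    (suslinHom k s f).eval 0 = algebraMap C S f.constantCoeff := by
  have : ((aeval (0 : S)).restrictScalars C).comp (suslinHom k s) =
      (Algebra.ofId C S).comp (MvPolynomial.aeval 0) :=
    MvPolynomial.algHom_ext fun i ↦ by simp [suslinHom, hk]
  simpa [aeval_def, Algebra.ofId_apply, MvPolynomial.aeval_zero] using congr($this f)

end SuslinEval

variable {C : Type*} [CommRing C] [IsNoetherianRing C] (c : Fin 3 ↪ ι)

theorem reach_constantCoeff {σ : Type*} [Finite σ] {d : ℕ}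
    (hd : ringKrullDim (MvPolynomial σ C) ≤ d) {v : ι ⊕ ι → MvPolynomial σ C}
    (hspan : Ideal.span (Set.range v) = ⊤) (hv : hypForm v = 0) {k : σ → ℕ} (hk : ∀ i, k i ≠ 0)
    {η : ι → MvPolynomial σ C} (hη : η (c 0) = 0)
    (hmonic : (suslinHom k (MvPolynomial.X - 1 : σ → MvPolynomial σ C)
      (η ⬝ᵥ (v ∘ .inl))).Monic) :
    Reach (2 * Fintype.card ι + (d + 1) * (8 * Fintype.card ι - 1)) v
      (MvPolynomial.C ∘ MvPolynomial.constantCoeff ∘ v) := by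
  set φ : _ →ₐ[C] _ := suslinHom k (MvPolynomial.X - 1 : σ → MvPolynomial σ C)
  have hφ := RingHom.map_dotProduct φ.toRingHom η (v ∘ .inl)
  obtain ⟨w, hw, hwx, hwy⟩ := exists_reach_monic (l := c 1) (v := φ ∘ v)
    (c.injective.ne (by decide : (0 : Fin 3) ≠ 1)) (η := φ ∘ η) (by simp [hη]) (hφ ▸ hmonic)
  have hspan' := hw.span_range_eq.trans (span_range_comp_eq_top φ.toRingHom hspan)
  have hw0 : hypForm w = 0 := by
    rw [hw.hypForm_eq]
    exact (hypForm_comp φ.toRingHom v).trans (by simp [hv])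
  have h₁ := hw.map (evalRingHom 1)
  have h₀ := (hw.map (evalRingHom 0)).symm
  have hφ₁ : evalRingHom 1 ∘ φ ∘ v = v := funext fun i ↦ eval_one_suslinHom k (v i)
  have hφ₀ : evalRingHom 0 ∘ φ ∘ v = MvPolynomial.C ∘ MvPolynomial.constantCoeff ∘ v :=
    funext fun i ↦ eval_zero_suslinHom k hk _ (v i)
  rw [hφ₁] at h₁
  rw [hφ₀] at h₀
  exact ((h₁.trans (reach_eval_of_monic c hd hspan' hw0 hwx hwy 1 0)).trans h₀).mono (by omega)

theorem reach_single_mvPolynomial {n d : ℕ} (hd : ringKrullDim C ≤ d)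
    (hcard : d + 2 ≤ Fintype.card ι) {v : ι ⊕ ι → MvPolynomial (Fin n) C}
    (hspan : Ideal.span (Set.range v) = ⊤) (hv : hypForm v = 0) :
    Reach (2 * (Fintype.card ι * (2 * (Fintype.card ι - 1))) + 2 * Fintype.card ι +
        3 * (Fintype.card ι - 1) + (n + d + 1) * (8 * Fintype.card ι - 1)) v
      (Pi.single (.inl (c 0)) 1) := by
  have hdim : ringKrullDim (MvPolynomial (Fin n) C) ≤ (n + d : ℕ) := by
    rw [MvPolynomial.ringKrullDim_of_isNoetherianRing, Nat.card_fin, add_comm n d, Nat.cast_add]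
    gcongr
  obtain ⟨a, b, h, hab⟩ := exists_reach_forall_le_height (v ∘ .inl) (v ∘ .inr)
    (by rwa [Sum.elim_comp_inl_inr]) (c 0)
  rw [Sum.elim_comp_inl_inr] at h
  obtain ⟨f, hf, k, hk, hmonic⟩ := exists_forall_monic_suslinHom (S := MvPolynomial (Fin n) C) hd
    (Ideal.span (a '' {j | j ≠ c 0})) fun P hP hle ↦
      le_trans (by exact_mod_cast (by omega : d + 1 ≤ Fintype.card ι - 1))
        (hab P hP fun j hj ↦ hle (Ideal.subset_span ⟨j, hj, rfl⟩))
  obtain ⟨η, hη, rfl⟩ := exists_dotProduct_eq_of_mem_span hf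
  have hspan' := h.span_range_eq.trans hspan
  have hform := h.hypForm_eq.trans hv
  have h₁ := reach_constantCoeff c hdim hspan' hform
    (fun i ↦ (zero_lt_two.trans_le (hk i)).ne') hη (hmonic _)
  have h₂ := (reach_single_of_ringKrullDim_le hd hcard
    (span_range_comp_eq_top MvPolynomial.constantCoeff hspan')
    (by rw [hypForm_comp, hform, map_zero]) (c 0)).map (MvPolynomial.C (σ := Fin n))
  have hsingle : MvPolynomial.C (σ := Fin n) ∘ Pi.single (Sum.inl (c 0) : ι ⊕ ι) (1 : C) =
      Pi.single (.inl (c 0)) 1 := by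
    ext1 i
    exact (Pi.apply_single (fun _ ↦ MvPolynomial.C (σ := Fin n) (R := C)) (fun _ ↦ map_zero _)
      _ _ i).trans (by rw [map_one])
  rw [hsingle] at h₂
  exact ((h.trans h₁).trans h₂).mono (by omega)

end ColumnReduction

section Isometry

variable {R ι : Type*} [CommRing R] [Fintype ι] {g : Matrix (ι ⊕ ι) (ι ⊕ ι) R}

theorem polar_hypForm (v w : ι ⊕ ι → R) :
    QuadraticMap.polar hypForm v w = (v ∘ Sum.swap) ⬝ᵥ w := by
  simp only [QuadraticMap.polar, hypForm, dotProduct, Fintype.sum_sum_type, Pi.add_apply,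
    ← Finset.sum_sub_distrib, ← Finset.sum_add_distrib]
  exact Finset.sum_congr rfl fun i _ ↦ by
    simp only [Function.comp_apply, Sum.swap_inl, Sum.swap_inr]
    ring

theorem comp_swap_dotProduct_mulVec (hg : ∀ v, hypForm (g *ᵥ v) = hypForm v) (v w : ι ⊕ ι → R) :
    ((g *ᵥ v) ∘ Sum.swap) ⬝ᵥ (g *ᵥ w) = (v ∘ Sum.swap) ⬝ᵥ w := by
  simp only [← polar_hypForm, QuadraticMap.polar, ← mulVec_add, hg]

variable [DecidableEq ι]

theorem mulVec_apply_swap (hg : ∀ v, hypForm (g *ᵥ v) = hypForm v) {p : ι ⊕ ι}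
    (hp : g *ᵥ Pi.single p 1 = Pi.single p 1) (v : ι ⊕ ι → R) : (g *ᵥ v) p.swap = v p.swap := by
  simpa [hp] using comp_swap_dotProduct_mulVec hg v (Pi.single p 1)

theorem isUnit_of_hypForm_mulVec (hg : ∀ v, hypForm (g *ᵥ v) = hypForm v) : IsUnit g := by
  refine IsUnit.of_mul_eq_one_right (gᵀ.submatrix Sum.swap Sum.swap) (ext fun i j ↦ ?_)
  have h := comp_swap_dotProduct_mulVec hg (Pi.single i.swap 1) (Pi.single j 1)
  rw [mulVec_single_one, mulVec_single_one, dotProduct_single_one] at h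
  refine h.trans ?_
  simp [Pi.single_apply, one_apply, Sum.swap_leftInverse.injective.eq_iff, eq_comm]

theorem hypForm_single (p : ι ⊕ ι) (c : R) : hypForm (Pi.single p c) = 0 := by
  rcases p with p | p <;> simp [hypForm, Pi.single_apply]

theorem span_range_mulVec_single (hg : ∀ v, hypForm (g *ᵥ v) = hypForm v) (p : ι ⊕ ι) :
    Ideal.span (Set.range (g *ᵥ Pi.single p 1)) = ⊤ := by
  have h := comp_swap_dotProduct_mulVec hg (Pi.single p.swap 1) (Pi.single p 1)
  rw [dotProduct_single_one, Function.comp_apply, Pi.single_eq_same] at h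
  have hmem : ((g *ᵥ Pi.single p.swap 1) ∘ Sum.swap) ⬝ᵥ (g *ᵥ Pi.single p 1) ∈
      Ideal.span (Set.range (g *ᵥ Pi.single p 1)) :=
    Ideal.sum_mem _ fun i _ ↦ Ideal.mul_mem_left _ _ (Ideal.subset_span ⟨i, rfl⟩)
  rwa [h, ← Ideal.eq_top_iff_one] at hmem

theorem exists_isElementary_mul_fix_swap (hg : ∀ v, hypForm (g *ᵥ v) = hypForm v) {p : ι ⊕ ι}
    (hp : g *ᵥ Pi.single p 1 = Pi.single p 1) :
    ∃ E, IsElementary (2 * (Fintype.card ι - 1)) E ∧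
      (E * g) *ᵥ Pi.single p 1 = Pi.single p 1 ∧
      (E * g) *ᵥ Pi.single p.swap 1 = Pi.single p.swap 1 := by
  obtain ⟨E, hE, hEg, hEp⟩ := exists_isElementary_mulVec_eq_single
    (v := g *ᵥ Pi.single p.swap 1) (p := p.swap)
    (by rw [mulVec_apply_swap hg hp, Pi.single_eq_same]) (by rw [hg, hypForm_single])
  refine ⟨E, hE, ?_, by rw [← mulVec_mulVec, hEg]⟩
  rw [← mulVec_mulVec, hp]
  simpa using hEp

theorem exists_isElementary_mul_fix {C : Type*} [CommRing C] [IsNoetherianRing C] {n d : ℕ}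
    (hd : ringKrullDim C ≤ d) (hcard : d + 2 ≤ Fintype.card ι) (c : Fin 3 ↪ ι)
    {g : Matrix (ι ⊕ ι) (ι ⊕ ι) (MvPolynomial (Fin n) C)}
    (hg : ∀ v, hypForm (g *ᵥ v) = hypForm v) :
    ∃ E, IsElementary (4 * Fintype.card ι * (Fintype.card ι - 1) + 2 * Fintype.card ι +
        5 * (Fintype.card ι - 1) + (n + d + 1) * (8 * Fintype.card ι - 1)) E ∧
      (E * g) *ᵥ Pi.single (.inl (c 0)) 1 = Pi.single (.inl (c 0)) 1 ∧
      (E * g) *ᵥ Pi.single (.inr (c 0)) 1 = Pi.single (.inr (c 0)) 1 := by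
  obtain ⟨E, hE, hEg⟩ := reach_single_mvPolynomial c hd hcard
    (span_range_mulVec_single hg (.inl (c 0))) (by rw [hg, hypForm_single])
  rw [mulVec_mulVec] at hEg
  obtain ⟨F, hF, hFl, hFr⟩ := exists_isElementary_mul_fix_swap
    (fun v ↦ by rw [← mulVec_mulVec, hE.hypForm_mulVec, hg]) hEg
  refine ⟨F * E, (hF.mul hE).mono ?_, by rwa [mul_assoc], by rwa [mul_assoc]⟩
  rw [show ∀ m k : ℕ, 4 * m * k = 2 * (m * (2 * k)) by intros; ring]
  omega

end Isometry

section Transport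

variable {R : Type*} [CommRing R] (r : ℕ)

/-- The numbering of the basis `e_1, …, e_r, e_{-r}, …, e_{-1}`: the index `inl i` stands for
`e_{i+1}` and `inr i` for `e_{-(i+1)}`. -/
def hypEquiv : Fin r ⊕ Fin r ≃ Fin (2 * r) :=
  (Equiv.sumCongr (Equiv.refl _) Fin.revPerm).trans
    (finSumFinEquiv.trans (finCongr (two_mul r).symm))

theorem hypEquiv_inl (i : Fin r) : hypEquiv r (.inl i) = ⟨i, by omega⟩ := rfl

theorem hypEquiv_inr (i : Fin r) : hypEquiv r (.inr i) = ⟨2 * r - 1 - i, by omega⟩ :=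
  Fin.ext <| by
    change r + (r - (i + 1)) = 2 * r - 1 - i
    omega

theorem negE_hypEquiv (p : Fin r ⊕ Fin r) : negE r (hypEquiv r p) = hypEquiv r p.swap := by
  rcases p with i | i
  · rw [Sum.swap_inl, hypEquiv_inr, hypEquiv_inl, negE]
  · rw [Sum.swap_inr, hypEquiv_inr, hypEquiv_inl, negE]
    exact Fin.ext (by dsimp only; omega)

theorem quadE_eq_hypForm (v : Fin (2 * r) → R) : quadE r v = hypForm (v ∘ hypEquiv r) := by
  simp only [quadE, hypForm, Function.comp_apply, hypEquiv_inl, hypEquiv_inr]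

theorem TE_hypEquiv (i j : Fin r ⊕ Fin r) (ξ : R) :
    TE r (hypEquiv r i) (hypEquiv r j) ξ =
      (transv i j ξ).submatrix (hypEquiv r).symm (hypEquiv r).symm := by
  simp only [TE, negE_hypEquiv, transv, submatrix_sub, submatrix_add, submatrix_smul, Pi.sub_apply,
    Pi.add_apply, Pi.smul_apply, submatrix_one_equiv, submatrix_single_equiv, Equiv.symm_symm]

variable {r}

theorem EOE_mono {N N' : ℕ} (h : N ≤ N') : EOE r N R ⊆ EOE r N' R :=
  fun _ ⟨L, hL, hg⟩ ↦ ⟨L, hL.trans h, hg⟩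

theorem IsElementary.submatrix_hypEquiv_mem_EOE {m : ℕ}
    {E : Matrix (Fin r ⊕ Fin r) (Fin r ⊕ Fin r) R} (hE : IsElementary m E) :
    E.submatrix (hypEquiv r).symm (hypEquiv r).symm ∈ EOE r m R := by
  induction hE with
  | one m => exact ⟨[], Nat.zero_le m, by simp, submatrix_one_equiv _⟩
  | @transv_mul m E i j hij hij' ξ _ ih =>
    obtain ⟨L, hL, hmem, hprod⟩ := ih
    refine ⟨TE r (hypEquiv r i) (hypEquiv r j) ξ :: L, by simpa, List.forall_mem_cons.2
      ⟨⟨_, _, ξ, (hypEquiv r).injective.ne hij, ?_, rfl⟩, hmem⟩, ?_⟩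
    · rw [negE_hypEquiv]
      exact (hypEquiv r).injective.ne hij'
    · rw [List.prod_cons, ← hprod, TE_hypEquiv, submatrix_mul_equiv]

variable {g : Matrix (Fin (2 * r)) (Fin (2 * r)) R}

theorem hypForm_submatrix_mulVec (hg : ∀ x, quadE r (g *ᵥ x) = quadE r x)
    (v : Fin r ⊕ Fin r → R) :
    hypForm (g.submatrix (hypEquiv r) (hypEquiv r) *ᵥ v) = hypForm v := by
  rw [submatrix_mulVec_equiv, ← quadE_eq_hypForm, hg, quadE_eq_hypForm, Function.comp_assoc,
    Equiv.symm_comp_self, Function.comp_id]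

theorem mem_OE_iff : g ∈ OE r R ↔ ∀ x, quadE r (g *ᵥ x) = quadE r x :=
  ⟨fun hg ↦ hg.2, fun hg ↦
    ⟨by simpa using isUnit_of_hypForm_mulVec (hypForm_submatrix_mulVec hg), hg⟩⟩

theorem quadE_submatrix_symm_mulVec {E : Matrix (Fin r ⊕ Fin r) (Fin r ⊕ Fin r) R}
    (hE : ∀ v, hypForm (E *ᵥ v) = hypForm v) (x : Fin (2 * r) → R) :
    quadE r (E.submatrix (hypEquiv r).symm (hypEquiv r).symm *ᵥ x) = quadE r x := by
  rw [quadE_eq_hypForm, submatrix_mulVec_equiv, Function.comp_assoc, Equiv.symm_comp_self,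
    Function.comp_id, hE, Equiv.symm_symm, quadE_eq_hypForm]

theorem submatrix_symm_mulVec_single {E : Matrix (Fin r ⊕ Fin r) (Fin r ⊕ Fin r) R}
    {p : Fin r ⊕ Fin r} (hp : E *ᵥ Pi.single p 1 = Pi.single p 1) :
    E.submatrix (hypEquiv r).symm (hypEquiv r).symm *ᵥ Pi.single (hypEquiv r p) 1 =
      Pi.single (hypEquiv r p) 1 := by
  have hsingle : Pi.single (hypEquiv r p) (1 : R) = Pi.single p 1 ∘ (hypEquiv r).symm := by
    ext q
    simp [Pi.single_apply, Equiv.symm_apply_eq]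
  rw [hsingle, submatrix_mulVec_equiv, Function.comp_assoc, Equiv.symm_symm,
    Equiv.symm_comp_self, Function.comp_id, hp]

theorem mulVec_negE (hg : g ∈ OE r R) {k : Fin (2 * r)}
    (hk : g *ᵥ Pi.single k 1 = Pi.single k 1) (x : Fin (2 * r) → R) :
    (g *ᵥ x) (negE r k) = x (negE r k) := by
  have hcomp (y : Fin (2 * r) → R) :
      g.submatrix (hypEquiv r) (hypEquiv r) *ᵥ (y ∘ hypEquiv r) = (g *ᵥ y) ∘ hypEquiv r := by
    rw [submatrix_mulVec_equiv, Function.comp_assoc, Equiv.self_comp_symm, Function.comp_id]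
  obtain ⟨p, rfl⟩ := (hypEquiv r).surjective k
  have hp : Pi.single (hypEquiv r p) (1 : R) ∘ hypEquiv r = Pi.single p 1 := by
    ext q
    simp [Pi.single_apply]
  have h := mulVec_apply_swap (hypForm_submatrix_mulVec hg.2) (p := p)
    (by rw [← hp, hcomp, hk]) (x ∘ hypEquiv r)
  rw [hcomp] at h
  rwa [negE_hypEquiv]

end Transport

section BlockDiagonal

variable {R : Type*} [CommRing R] {r : ℕ}

/-- `g = diag(1, β, 1)` with `β` of size `2r - 2`. -/
def IsOneBlockOne (hr : 0 < r) (g : Matrix (Fin (2 * r)) (Fin (2 * r)) R)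
    (β : Matrix (Fin (2 * (r - 1))) (Fin (2 * (r - 1))) R) : Prop :=
  g ⟨0, by omega⟩ ⟨0, by omega⟩ = 1 ∧
  g ⟨2 * r - 1, by omega⟩ ⟨2 * r - 1, by omega⟩ = 1 ∧
  (∀ j : Fin (2 * r), j.val ≠ 0 → g ⟨0, by omega⟩ j = 0 ∧ g j ⟨0, by omega⟩ = 0) ∧
  (∀ j : Fin (2 * r), j.val ≠ 2 * r - 1 →
    g ⟨2 * r - 1, by omega⟩ j = 0 ∧ g j ⟨2 * r - 1, by omega⟩ = 0) ∧
  ∀ i j : Fin (2 * (r - 1)), g ⟨i.val + 1, by omega⟩ ⟨j.val + 1, by omega⟩ = β i j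

/-- The positions of `e_2, …, e_r, e_{-r}, …, e_{-2}`. -/
def innerIndex (r : ℕ) (j : Fin (2 * (r - 1))) : Fin (2 * r) := ⟨j + 1, by omega⟩

theorem innerIndex_injective : Function.Injective (innerIndex r) := fun _ _ h ↦
  Fin.ext (Nat.succ_injective (congrArg Fin.val h))

theorem quadE_comp_innerIndex (hr : 0 < r) {x : Fin (2 * r) → R} (hx : x ⟨0, by omega⟩ = 0) :
    quadE (r - 1) (x ∘ innerIndex r) = quadE r x := by
  obtain ⟨s, rfl⟩ := Nat.exists_eq_add_of_le' hr
  simp only [quadE, Nat.add_sub_cancel]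
  rw [Fin.sum_univ_succ]
  simp only [Fin.val_zero, hx, zero_mul, zero_add]
  refine Finset.sum_congr rfl fun i _ ↦ ?_
  congr 2
  refine congrArg x (Fin.ext ?_)
  change 2 * s - 1 - i + 1 = 2 * (s + 1) - 1 - (i + 1)
  omega

theorem submatrix_innerIndex_mulVec {g : Matrix (Fin (2 * r)) (Fin (2 * r)) R}
    {x : Fin (2 * r) → R} (hx : ∀ k ∉ Set.range (innerIndex r), x k = 0) :
    g.submatrix (innerIndex r) (innerIndex r) *ᵥ (x ∘ innerIndex r) = (g *ᵥ x) ∘ innerIndex r :=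
  funext fun i ↦ Fintype.sum_of_injective _ innerIndex_injective _ _
    (fun k hk ↦ by rw [hx k hk, mul_zero]) fun _ ↦ rfl

theorem exists_isOneBlockOne (hr : 0 < r) {g : Matrix (Fin (2 * r)) (Fin (2 * r)) R}
    (hg : g ∈ OE r R) (h0 : g *ᵥ Pi.single ⟨0, by omega⟩ 1 = Pi.single ⟨0, by omega⟩ 1)
    (hl : g *ᵥ Pi.single ⟨2 * r - 1, by omega⟩ 1 = Pi.single ⟨2 * r - 1, by omega⟩ 1) :
    ∃ β ∈ OE (r - 1) R, IsOneBlockOne hr g β := by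
  have hrow0 (x) : (g *ᵥ x) ⟨0, by omega⟩ = x ⟨0, by omega⟩ := by
    have h := mulVec_negE hg hl x
    rwa [show negE r ⟨2 * r - 1, by omega⟩ = ⟨0, by omega⟩ from Fin.ext (Nat.sub_self _)] at h
  have hrowl (x) : (g *ᵥ x) ⟨2 * r - 1, by omega⟩ = x ⟨2 * r - 1, by omega⟩ :=
    mulVec_negE hg h0 x
  have hentry (j k) : (g *ᵥ Pi.single k 1) j = g j k := by rw [mulVec_single_one, col_apply]
  have hzero {j k : Fin (2 * r)} (h : j.val ≠ k.val) : Pi.single (M := fun _ ↦ R) k 1 j = 0 :=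
    Pi.single_eq_of_ne (Fin.val_ne_iff.1 h) 1
  refine ⟨g.submatrix (innerIndex r) (innerIndex r), mem_OE_iff.2 fun y ↦ ?_,
    by rw [← hentry, h0, Pi.single_eq_same], by rw [← hentry, hl, Pi.single_eq_same],
    fun j hj ↦ ⟨by rw [← hentry, hrow0, hzero hj.symm], by rw [← hentry, h0, hzero hj]⟩,
    fun j hj ↦ ⟨by rw [← hentry, hrowl, hzero hj.symm], by rw [← hentry, hl, hzero hj]⟩,
    fun _ _ ↦ rfl⟩
  obtain ⟨x, rfl, hx⟩ : ∃ x, x ∘ innerIndex r = y ∧ ∀ k ∉ Set.range (innerIndex r), x k = 0 :=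
    ⟨Function.extend (innerIndex r) y 0, Function.extend_comp innerIndex_injective y 0,
      fun k hk ↦ Function.extend_apply' y (0 : Fin (2 * r) → R) k hk⟩
  have hx0 : x ⟨0, by omega⟩ = 0 :=
    hx _ fun ⟨j, hj⟩ ↦ Nat.succ_ne_zero _ (congrArg Fin.val hj)
  rw [submatrix_innerIndex_mulVec hx, quadE_comp_innerIndex hr (by rw [hrow0, hx0]), hg.2,
    quadE_comp_innerIndex hr hx0]

end BlockDiagonal

theorem transvection_count_le {n D r : ℕ} (hr3 : 3 ≤ r) (hrD : D + 2 ≤ r) :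
    4 * r * (r - 1) + 2 * r + 5 * (r - 1) + (n + D + 1) * (8 * r - 1) ≤
      n * (11 * r - 7) +
        (n * D + r * (r - 1) / 2) * (r * (r - 1) / 2 + (r - 1 + 1) / 2 + 8 * r - 2) +
          10 * r - 10 := by
  obtain ⟨q, rfl⟩ : ∃ q, r = q + 1 := ⟨r - 1, by omega⟩
  rw [Nat.add_sub_cancel]
  obtain ⟨t, ht⟩ : ∃ t, (q + 1) * q = 2 * t := by
    rw [mul_comm]
    exact (Nat.even_mul_succ_self q).two_dvd
  have hquad : 8 * t + 7 * q + 2 + q * (8 * q + 7) ≤ t * (t + 8 * q + 7) + 10 * q := by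
    have h3t : 3 ≤ t := by nlinarith
    have hqt : q + 1 ≤ t := by nlinarith
    nlinarith [Nat.mul_le_mul hqt (le_refl (8 * q + 7)), Nat.mul_le_mul hqt (le_refl t)]
  calc
    _ = 8 * t + 7 * q + 2 + (D + 1) * (8 * q + 7) + n * (8 * q + 7) := by
      rw [show 8 * (q + 1) - 1 = 8 * q + 7 by omega, mul_assoc 4, ht]
      ring
    _ ≤ 8 * t + 7 * q + 2 + q * (8 * q + 7) + n * (11 * q + 4) := by
      gcongr 8 * t + 7 * q + 2 + ?_ * (8 * q + 7) + n * ?_ <;> omega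
    _ ≤ t * (t + 8 * q + 7) + 10 * q + n * (11 * q + 4) := by gcongr
    _ ≤ (n * D + t) * (t + (q + 1) / 2 + 8 * (q + 1) - 2) + 10 * q + n * (11 * q + 4) := by
      gcongr ?_ * ?_ + 10 * q + n * (11 * q + 4) <;> omega
    _ = _ := by
      rw [ht, Nat.mul_div_cancel_left t two_pos, show 11 * (q + 1) - 7 = 11 * q + 4 by omega]
      omega

theorem even_matrix_bounded_reduction_general {C : Type*} [CommRing C] [IsNoetherianRing C]
    {n D : ℕ} (hdim : ringKrullDim C ≤ D) {r : ℕ} (hr3 : 3 ≤ r) (hrD : D + 2 ≤ r)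
    {g : Matrix (Fin (2 * r)) (Fin (2 * r)) (MvPolynomial (Fin n) C)}
    (hg : g ∈ OE r (MvPolynomial (Fin n) C)) :
    ∃ E ∈ EOE r (4 * r * (r - 1) + 2 * r + 5 * (r - 1) + (n + D + 1) * (8 * r - 1))
        (MvPolynomial (Fin n) C),
      ∃ β ∈ OE (r - 1) (MvPolynomial (Fin n) C),
        IsOneBlockOne (Nat.zero_lt_of_lt hr3) (E * g) β := by
  obtain ⟨E, hE, hEl, hEr⟩ := exists_isElementary_mul_fix hdim (by simpa using hrD)
    (Fin.castLEEmb hr3) (hypForm_submatrix_mulVec hg.2)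
  rw [Fintype.card_fin] at hE
  have hEg : E.submatrix (hypEquiv r).symm (hypEquiv r).symm * g =
      (E * g.submatrix (hypEquiv r) (hypEquiv r)).submatrix
        (hypEquiv r).symm (hypEquiv r).symm := by
    rw [← submatrix_mul_equiv _ _ _ (hypEquiv r).symm, submatrix_submatrix,
      (hypEquiv r).self_comp_symm, submatrix_id_id]
  refine ⟨_, hE.submatrix_hypEquiv_mem_EOE, exists_isOneBlockOne _ ?_ ?_ ?_⟩
  · exact mem_OE_iff.2 fun x ↦ by
      rw [← mulVec_mulVec, quadE_submatrix_symm_mulVec hE.hypForm_mulVec, hg.2]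
  · have h := submatrix_symm_mulVec_single hEl
    rwa [hypEquiv_inl, ← hEg] at h
  · have h := submatrix_symm_mulVec_single hEr
    rwa [hypEquiv_inr, ← hEg] at h

/-- Bounded reduction for the even split orthogonal group over a polynomial ring:
any `g ∈ O(2r, C[x_1,…,x_n])` can be reduced by at most
`N = n(11r−7) + (nD + r(r−1)/2)(r(r−1)/2 + ⌈(r−1)/2⌉ + 8r−2) + 10r−10`
elementary orthogonal transvections (multiplied from the left) to `diag(1, β, 1)`
with `β ∈ O(2r−2, C[x_1,…,x_n])`. -/
theorem even_matrix_bounded_reduction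
    (C : Type*) [CommRing C] [IsNoetherianRing C] (n D : ℕ)
    (hdim : ringKrullDim C = (D : WithBot ℕ∞))
    (r : ℕ) (hr : max 3 (D + 2) ≤ r)
    (g : Matrix (Fin (2 * r)) (Fin (2 * r)) (MvPolynomial (Fin n) C))
    (hg : g ∈ OE r (MvPolynomial (Fin n) C)) :
    ∃ E ∈ EOE r
        (n * (11 * r - 7) +
          (n * D + r * (r - 1) / 2) * (r * (r - 1) / 2 + (r - 1 + 1) / 2 + 8 * r - 2) +
            10 * r - 10)
        (MvPolynomial (Fin n) C),
      ∃ β ∈ OE (r - 1) (MvPolynomial (Fin n) C),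
        (E * g) ⟨0, by omega⟩ ⟨0, by omega⟩ = 1 ∧
        (E * g) ⟨2 * r - 1, by omega⟩ ⟨2 * r - 1, by omega⟩ = 1 ∧
        (∀ j : Fin (2 * r), j.val ≠ 0 →
          (E * g) ⟨0, by omega⟩ j = 0 ∧ (E * g) j ⟨0, by omega⟩ = 0) ∧
        (∀ j : Fin (2 * r), j.val ≠ 2 * r - 1 →
          (E * g) ⟨2 * r - 1, by omega⟩ j = 0 ∧ (E * g) j ⟨2 * r - 1, by omega⟩ = 0) ∧
        ∀ i j : Fin (2 * (r - 1)),
          (E * g) ⟨i.val + 1, by omega⟩ ⟨j.val + 1, by omega⟩ = β i j := by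
  obtain ⟨E, hE, hβ⟩ := even_matrix_bounded_reduction_general hdim.le (le_of_max_le_left hr)
    (le_of_max_le_right hr) hg
  exact ⟨E, EOE_mono (transvection_count_le (le_of_max_le_left hr) (le_of_max_le_right hr)) hE, hβ⟩
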